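/- arXiv:2402.14319 — 4 statements merged into one kernel-verified Lean document; each statement's English description precedes it below -/
import Mathlib

section
/- Let n ≥ 1, p = 1 + 2/n, T_* ∈ (0,∞), and γ ∈ [0, n/2). Then there exist ε > 0 and C > 0 (depending only on T_*, n, γ) with the following property: if φ is locally integrable on ℝ^n and |||φ|||_{1,n/2;T^{1/2}} ≤ ε for some T ∈ (0,T_*], then there exists a solution u of ∂_t u − Δu = |u|^{p−1}u on ℝ^n × (0,T) with initial data φ (in the Duhamel integral sense) satisfying, for all t ∈ (0,T): |||u(t)|||_{1,n/2;T^{1/2}} ≤ C |||φ|||_{1,n/2;T^{1/2}}; |||u(t)|||_{p,γ;T^{1/2}} ≤ C t^{−(n/2)(1−1/p)} [log(e+1/t)]^{−n/2 + γ/p} |||φ|||_{1,n/2;T^{1/2}}; and ‖u(t)‖_{L^∞} ≤ C t^{−n/2} [log(e+1/t)]^{−n/2} |||φ|||_{1,n/2;T^{1/2}}. -/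
open MeasureTheory Real Set ENNReal

noncomputable def logFac (s : ℝ) : ℝ := Real.log (Real.exp 1 + 1 / s)

noncomputable def zygNorm (n : ℕ) (q α : ℝ)
    (f : EuclideanSpace ℝ (Fin n) → ℝ) : ℝ≥0∞ :=
  ⨆ s : Set.Ioi (0 : ℝ),
    (ENNReal.ofReal (logFac s.1) ^ α *
      ⨆ E : {E : Set (EuclideanSpace ℝ (Fin n)) //
          MeasurableSet E ∧ volume E = ENNReal.ofReal s.1},
        ∫⁻ x in E.1, ENNReal.ofReal (|f x| ^ q)) ^ (1 / q)

noncomputable def zygNormUL (n : ℕ) (q α ρ : ℝ)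
    (f : EuclideanSpace ℝ (Fin n) → ℝ) : ℝ≥0∞ :=
  ⨆ z : EuclideanSpace ℝ (Fin n),
    zygNorm n q α ((Metric.ball z ρ).indicator f)

noncomputable def heatKernel (n : ℕ) (x : EuclideanSpace ℝ (Fin n)) (t : ℝ) : ℝ :=
  (4 * Real.pi * t) ^ (-(n : ℝ) / 2) * Real.exp (-‖x‖ ^ 2 / (4 * t))

/-- `u` is a solution of `∂ₜu − Δu = |u|^{p−1}u` on `ℝ^n × (0,T)` with initial data `φ`,
in the Duhamel integral sense. -/
def IsSolution (n : ℕ) (p T : ℝ) (φ : EuclideanSpace ℝ (Fin n) → ℝ)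
    (u : EuclideanSpace ℝ (Fin n) → ℝ → ℝ) : Prop :=
  Measurable (fun q : EuclideanSpace ℝ (Fin n) × ℝ => u q.1 q.2) ∧
  ∀ᵐ q : EuclideanSpace ℝ (Fin n) × ℝ
      ∂(volume.prod (volume.restrict (Set.Ioo 0 T))),
    Integrable (fun y => heatKernel n (q.1 - y) q.2 * φ y) volume ∧
    Integrable (fun ys : EuclideanSpace ℝ (Fin n) × ℝ =>
        heatKernel n (q.1 - ys.1) (q.2 - ys.2) * (|u ys.1 ys.2| ^ (p - 1) * u ys.1 ys.2))
      (volume.prod (volume.restrict (Set.Ioo 0 q.2))) ∧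
    u q.1 q.2 = (∫ y, heatKernel n (q.1 - y) q.2 * φ y) +
      ∫ s in Set.Ioo 0 q.2, ∫ y,
        heatKernel n (q.1 - y) (q.2 - s) * (|u y s| ^ (p - 1) * u y s)


lemma lf_one_le {s : ℝ} (hs : 0 < s) : 1 ≤ logFac s := by
  unfold logFac
  rw [Real.le_log_iff_exp_le (by positivity)]
  have : 0 < 1 / s := by positivity
  linarith

lemma lf_pos {s : ℝ} (hs : 0 < s) : 0 < logFac s := lt_of_lt_of_le one_pos (lf_one_le hs)

lemma lf_anti {s s' : ℝ} (hs : 0 < s) (h : s ≤ s') : logFac s' ≤ logFac s := by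
  unfold logFac
  have : 0 < s' := by linarith
  apply Real.log_le_log (by positivity)
  have := one_div_le_one_div_of_le hs h
  linarith

lemma lf_div {s k : ℝ} (hs : 0 < s) (hk : 1 ≤ k) :
    logFac (s / k) ≤ (1 + Real.log k) * logFac s := by
  have h1 := lf_one_le hs
  have hk0 : 0 < k := by linarith
  have hlk := Real.log_nonneg hk
  have : logFac (s / k) ≤ Real.log k + logFac s := by
    unfold logFac
    rw [← Real.log_mul (by positivity) (by positivity)]
    apply Real.log_le_log (by positivity)
    have : 1 / (s / k) = k * (1 / s) := by field_simp
    rw [this, mul_add]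
    have := Real.exp_pos 1
    nlinarith
  nlinarith

lemma lf_rpow_le {s a : ℝ} (hs : 0 < s) (ha : 0 < a) :
    logFac (s ^ a) ≤ (a + 2) * logFac s := by
  unfold logFac
  have he : (1 : ℝ) < Real.exp 1 := by
    have := Real.add_one_lt_exp (x := 1) one_ne_zero; linarith
  have he2 : (2 : ℝ) < Real.exp 1 := by
    have := Real.add_one_lt_exp (x := 1) one_ne_zero; linarith
  have hx : 0 < 1 / s := by positivity
  rw [← Real.log_rpow (by positivity)]
  apply Real.log_le_log (by positivity)
  set x := 1 / s with hxd
  have h1 : 1 / s ^ a = x ^ a := by rw [hxd, Real.div_rpow (by norm_num) hs.le, Real.one_rpow]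
  rw [h1, Real.rpow_add (by positivity)]
  have h2 : (1 : ℝ) ≤ (Real.exp 1 + x) ^ a := Real.one_le_rpow (by linarith) ha.le
  have h3 : x ^ a ≤ (Real.exp 1 + x) ^ a := Real.rpow_le_rpow hx.le (by linarith) ha.le
  have h4 : Real.exp 1 * Real.exp 1 ≤ (Real.exp 1 + x) ^ (2:ℝ) := by
    rw [Real.rpow_two]; nlinarith
  have h5 : 0 ≤ (Real.exp 1 + x) ^ a := by positivity
  have h6 := mul_le_mul_of_nonneg_left h4 h5
  set A := (Real.exp 1 + x) ^ a
  have h7 : Real.exp 1 ≤ Real.exp 1 * A := by nlinarith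
  have h8 : Real.exp 1 + 1 ≤ Real.exp 1 * Real.exp 1 := by nlinarith
  have h9 := mul_le_mul_of_nonneg_left h8 h5
  linarith

lemma lf_mul_le (c : ℝ) (hc : 0 < c) : ∃ K : ℝ, 1 ≤ K ∧ ∀ s : ℝ, 0 < s →
    logFac (c * s) ≤ K * logFac s := by
  refine ⟨1 + Real.log (max 1 c⁻¹), ?_, fun s hs => ?_⟩
  · have := Real.log_nonneg (le_max_left 1 c⁻¹); linarith
  · refine le_trans ?_ (lf_div hs (le_max_left 1 c⁻¹))
    have hm : 0 < max 1 c⁻¹ := by positivity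
    apply lf_anti (by positivity)
    rw [div_le_iff₀ hm]
    have : c⁻¹ ≤ max 1 c⁻¹ := le_max_right _ _
    have h2 : c * c⁻¹ = 1 := mul_inv_cancel₀ hc.ne'
    have := mul_le_mul_of_nonneg_left this (by positivity : 0 ≤ c * s)
    calc s = c * s * c⁻¹ := by field_simp
      _ ≤ _ := this

lemma lf_pow (c a : ℝ) (hc : 0 < c) (ha : 0 < a) : ∃ K : ℝ, 1 ≤ K ∧ ∀ s : ℝ, 0 < s →
    logFac (c * s ^ a) ≤ K * logFac s ∧ logFac s ≤ K * logFac (c * s ^ a) := by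
  obtain ⟨K1, hK1, h1⟩ := lf_mul_le c hc
  obtain ⟨K2, hK2, h2⟩ := lf_mul_le c⁻¹ (by positivity)
  have hia : 0 < a⁻¹ := by positivity
  refine ⟨K1 * (a + 2) + K2 * (a⁻¹ + 2), by nlinarith, fun s hs => ?_⟩
  have hsa : 0 < s ^ a := by positivity
  have p1 := lf_pos hs
  have p2 : 0 < logFac (c * s ^ a) := lf_pos (by positivity)
  constructor
  · have e1 := h1 _ hsa
    have e2 := lf_rpow_le hs ha
    have e3 : K1 * logFac (s ^ a) ≤ K1 * ((a + 2) * logFac s) := by gcongr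
    have e4 : 0 ≤ K2 * (a⁻¹ + 2) * logFac s := by positivity
    nlinarith
  · have e1 := lf_rpow_le hsa hia
    rw [← Real.rpow_mul hs.le, mul_inv_cancel₀ ha.ne', Real.rpow_one] at e1
    have e2 := h2 (c * s ^ a) (by positivity)
    rw [inv_mul_cancel_left₀ hc.ne'] at e2
    have e3 : (a⁻¹ + 2) * logFac (s ^ a) ≤ (a⁻¹ + 2) * (K2 * logFac (c * s ^ a)) := by gcongr
    have e4 : 0 ≤ K1 * (a + 2) * logFac (c * s ^ a) := by positivity
    nlinarith

lemma lf_almost (b m : ℝ) (hb : 0 < b) (hm : 0 ≤ m) : ∃ C : ℝ, 0 < C ∧ ∀ r s : ℝ, 0 < r → r ≤ s →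
    r ^ b * logFac r ^ m ≤ C * (s ^ b * logFac s ^ m) := by
  -- L(r) ≤ (1 + log k) L(s), k = s / r, (1+log k) ≤ (1 + 1/d) k^d, d m ≤ b
  obtain ⟨d, hd, hdm⟩ : ∃ d : ℝ, 0 < d ∧ d * m ≤ b := by
    refine ⟨b / (m + 1), by positivity, ?_⟩
    rw [div_mul_eq_mul_div, div_le_iff₀ (by positivity)]; nlinarith
  refine ⟨(1 + 1 / d) ^ m, by positivity, fun r s hr hrs => ?_⟩
  have hs : 0 < s := by linarith
  set k := s / r with hk
  have hk1 : 1 ≤ k := by rw [hk, one_le_div hr]; exact hrs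
  have hk0 : 0 < k := by linarith
  have hkd : 1 ≤ k ^ d := Real.one_le_rpow hk1 hd.le
  have h1 : logFac r ≤ (1 + Real.log k) * logFac s := by
    have := lf_div hs hk1
    rwa [hk, div_div_cancel₀ hs.ne'] at this
  have h2 : 1 + Real.log k ≤ (1 + 1 / d) * k ^ d := by
    have := Real.log_le_rpow_div hk0.le hd
    have e : (1 + 1 / d) * k ^ d = k ^ d + k ^ d / d := by ring
    rw [e]; linarith
  have p1 := lf_pos hs
  have p2 := lf_pos hr
  have h3 : logFac r ^ m ≤ ((1 + 1 / d) * k ^ d * logFac s) ^ m := by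
    apply Real.rpow_le_rpow p2.le _ hm
    exact h1.trans (by gcongr)
  rw [Real.mul_rpow (by positivity) p1.le, Real.mul_rpow (by positivity) (by positivity),
    ← Real.rpow_mul hk0.le] at h3
  have h4 : k ^ (d * m) ≤ k ^ b := Real.rpow_le_rpow_of_exponent_le hk1 hdm
  have h5 : r ^ b * k ^ b = s ^ b := by
    rw [← Real.mul_rpow hr.le hk0.le, hk, mul_div_cancel₀ _ hr.ne']
  calc r ^ b * logFac r ^ m ≤ r ^ b * ((1 + 1 / d) ^ m * k ^ b * logFac s ^ m) := by
        gcongr; exact h3.trans (by gcongr)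
    _ = (1 + 1 / d) ^ m * (r ^ b * k ^ b * logFac s ^ m) := by ring
    _ = _ := by rw [h5]

lemma lf_hasDeriv {s : ℝ} (hs : 0 < s) :
    HasDerivAt logFac (-(1 / (s * (Real.exp 1 * s + 1)))) s := by
  unfold logFac
  have h1 : HasDerivAt (fun s : ℝ => Real.exp 1 + 1 / s) (-(s ^ 2)⁻¹) s := by
    have := (hasDerivAt_inv hs.ne').const_add (Real.exp 1)
    simpa [one_div] using this
  have h2 := h1.log (by positivity)
  convert h2 using 1
  field_simp

lemma lf_measurable : Measurable logFac := by
  unfold logFac; fun_prop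

lemma lf_tendsto : Filter.Tendsto logFac (nhdsWithin 0 (Ioi 0)) Filter.atTop := by
  unfold logFac
  apply Real.tendsto_log_atTop.comp
  apply Filter.tendsto_atTop_add_const_left
  exact (tendsto_inv_nhdsGT_zero (𝕜 := ℝ)).congr (fun x => (one_div x).symm)

lemma lf_int1 (a T : ℝ) (ha : 0 < a) (hT : 0 < T) : ∃ C : ℝ, 0 < C ∧ ∀ r : ℝ, 0 < r → r ≤ T →
    ∫⁻ s in Ioo 0 r, ENNReal.ofReal (s ^ (-1 : ℝ) * logFac s ^ (-a - 1)) ≤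
      ENNReal.ofReal (C * logFac r ^ (-a)) := by
  refine ⟨(Real.exp 1 * T + 1) / a, by positivity, fun r hr hrT => ?_⟩
  set g : ℝ → ℝ := fun s => if s ≤ 0 then 0 else logFac s ^ (-a) with hg
  set g' : ℝ → ℝ := fun s => a * (logFac s ^ (-a - 1) * (1 / (s * (Real.exp 1 * s + 1)))) with hg'
  have hd : ∀ s ∈ Ioo (0:ℝ) r, HasDerivAt g (g' s) s := by
    intro s hs
    have h1 := (lf_hasDeriv hs.1).rpow_const (p := -a) (Or.inl (lf_pos hs.1).ne')
    have h2 : g =ᶠ[nhds s] fun s => logFac s ^ (-a) := by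
      filter_upwards [lt_mem_nhds hs.1] with y hy
      simp [hg, not_le.2 hy]
    refine (h1.congr_of_eventuallyEq h2).congr_deriv ?_
    simp only [hg']; ring
  have hpos : ∀ s ∈ Ioo (0:ℝ) r, 0 ≤ g' s := by
    intro s hs
    have := lf_pos hs.1
    have := hs.1
    simp only [hg']; positivity
  have hc : ContinuousOn g (Icc 0 r) := by
    intro s hs
    rcases hs.1.eq_or_lt with h | h
    · subst h
      have h0 : g 0 = 0 := by simp [hg]
      have : ContinuousWithinAt g (Ioi 0) 0 := by
        unfold ContinuousWithinAt
        rw [h0]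
        have h3 := (tendsto_rpow_neg_atTop ha).comp lf_tendsto
        refine h3.congr' ?_
        filter_upwards [self_mem_nhdsWithin] with y hy
        simp [hg, not_le.2 (mem_Ioi.1 hy)]
      refine ContinuousWithinAt.mono (continuousWithinAt_insert_self.2 this) ?_
      intro y hy
      rcases hy.1.eq_or_lt with h | h
      · left; exact h.symm
      · right; exact h
    · have h1 := (lf_hasDeriv h).rpow_const (p := -a) (Or.inl (lf_pos h).ne')
      refine ContinuousAt.continuousWithinAt ?_
      refine h1.continuousAt.congr ?_
      filter_upwards [lt_mem_nhds h] with y hy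
      simp [hg, not_le.2 hy]
  have hint := intervalIntegral.integrableOn_deriv_of_nonneg hc hd hpos
  have hval := intervalIntegral.integral_eq_sub_of_hasDerivAt_of_le hr.le hc hd
    ((intervalIntegrable_iff_integrableOn_Ioc_of_le hr.le).2 hint)
  have hgr : g r - g 0 = logFac r ^ (-a) := by simp [hg, not_le.2 hr]
  rw [intervalIntegral.integral_of_le hr.le, integral_Ioc_eq_integral_Ioo, hgr] at hval
  have hint' := hint.mono_set Ioo_subset_Ioc_self
  have hl := ofReal_integral_eq_lintegral_ofReal hint'
    ((ae_restrict_iff' measurableSet_Ioo).2 (Filter.Eventually.of_forall hpos))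
  rw [hval] at hl
  rw [ENNReal.ofReal_mul (by positivity), hl, ← lintegral_const_mul' _ _ ENNReal.ofReal_ne_top]
  apply setLIntegral_mono' measurableSet_Ioo
  intro s hs
  have h0 := hs.1
  have hp := lf_pos h0
  rw [← ENNReal.ofReal_mul (by positivity)]
  apply ENNReal.ofReal_le_ofReal
  simp only [hg']
  have e : (Real.exp 1 * T + 1) / a * (a * (logFac s ^ (-a - 1) * (1 / (s * (Real.exp 1 * s + 1)))))
      = ((Real.exp 1 * T + 1) / (Real.exp 1 * s + 1)) * (s⁻¹ * logFac s ^ (-a - 1)) := by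
    field_simp
  rw [e, Real.rpow_neg_one]
  have : 1 ≤ (Real.exp 1 * T + 1) / (Real.exp 1 * s + 1) := by
    rw [one_le_div (by positivity)]
    have : s ≤ T := hs.2.le.trans hrT
    gcongr
  exact le_mul_of_one_le_left (by positivity) this

lemma lf_int2 (a : ℝ) (ha : 0 < a) : ∃ C : ℝ, 0 < C ∧ ∀ r : ℝ, 0 < r →
    ∫⁻ s in Ioi r, ENNReal.ofReal (s ^ (-a - 1) * logFac s ^ (-a - 1)) ≤
      ENNReal.ofReal (C * (r ^ (-a) * logFac r ^ (-a))) := by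
  obtain ⟨C, hC, h⟩ := lf_almost (a / 2) (a + 1) (by positivity) (by positivity)
  refine ⟨C * (2 / a), by positivity, fun r hr => ?_⟩
  have hLr := lf_pos hr
  -- s^{-a-1} L(s)^{-a-1} ≤ C r^{-a/2} L(r)^{-a-1} s^{-a/2-1}
  have key : ∀ s ∈ Ioi r, ENNReal.ofReal (s ^ (-a - 1) * logFac s ^ (-a - 1)) ≤
      ENNReal.ofReal (C * (r ^ (-(a / 2)) * logFac r ^ (-a))) * ENNReal.ofReal (s ^ (-(a / 2) - 1)) := by
    intro s hs
    have hs' : r < s := hs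
    have h0 : 0 < s := hr.trans hs'
    have hp := lf_pos h0
    rw [← ENNReal.ofReal_mul (by positivity)]
    apply ENNReal.ofReal_le_ofReal
    have h1 := h r s hr hs'.le
    have e1 : s ^ (-a - 1) = s ^ (-(a / 2) - 1) * (s ^ (a / 2))⁻¹ := by
      rw [← Real.rpow_neg h0.le, ← Real.rpow_add h0]; congr 1; ring
    have e2 : logFac s ^ (-a - 1) = (logFac s ^ (a + 1))⁻¹ := by
      rw [← Real.rpow_neg hp.le]; congr 1; ring
    have e3 : r ^ (-(a / 2)) = (r ^ (a / 2))⁻¹ := Real.rpow_neg hr.le _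
    have e4 : (logFac r ^ (a + 1))⁻¹ ≤ logFac r ^ (-a) := by
      rw [← Real.rpow_neg hLr.le]
      exact Real.rpow_le_rpow_of_exponent_le (lf_one_le hr) (by linarith)
    have h2 : (s ^ (a / 2) * logFac s ^ (a + 1))⁻¹ ≤ C * (r ^ (a / 2) * logFac r ^ (a + 1))⁻¹ := by
      rw [← div_eq_mul_inv, inv_le_comm₀ (by positivity) (by positivity), inv_div,
        div_le_iff₀ hC]
      linarith
    calc s ^ (-a - 1) * logFac s ^ (-a - 1)
        = s ^ (-(a / 2) - 1) * (s ^ (a / 2) * logFac s ^ (a + 1))⁻¹ := by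
          rw [e1, e2, mul_inv]; ring
      _ ≤ s ^ (-(a / 2) - 1) * (C * (r ^ (a / 2) * logFac r ^ (a + 1))⁻¹) := by gcongr
      _ = C * (r ^ (-(a / 2)) * (logFac r ^ (a + 1))⁻¹) * s ^ (-(a / 2) - 1) := by
          rw [e3, mul_inv]; ring
      _ ≤ _ := by gcongr
  refine (setLIntegral_mono' measurableSet_Ioi key).trans ?_
  rw [lintegral_const_mul' _ _ ENNReal.ofReal_ne_top]
  have hlt : -(a / 2) - 1 < -1 := by linarith
  rw [← ofReal_integral_eq_lintegral_ofReal (integrableOn_Ioi_rpow_of_lt hlt hr)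
    ((ae_restrict_iff' measurableSet_Ioi).2 (Filter.Eventually.of_forall
      (fun s hs => Real.rpow_nonneg (hr.trans hs).le _))), integral_Ioi_rpow_of_lt hlt hr,
    ← ENNReal.ofReal_mul (by positivity)]
  apply ENNReal.ofReal_le_ofReal
  apply le_of_eq
  have e5 : r ^ (-a) = r ^ (-(a / 2)) * r ^ (-(a/2)) := by
    rw [← Real.rpow_add hr]; congr 1; ring
  have e6 : -(a / 2) - 1 + 1 = -(a / 2) := by ring
  rw [e5, e6]
  field_simp


/-- heat semigroup on nonnegative functions -/
noncomputable def heatS (n : ℕ) (f : EuclideanSpace ℝ (Fin n) → ℝ≥0∞)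
    (x : EuclideanSpace ℝ (Fin n)) (t : ℝ) : ℝ≥0∞ :=
  ∫⁻ y, ENNReal.ofReal (heatKernel n (x - y) t) * f y

lemma heatKernel_nonneg (n : ℕ) (x : EuclideanSpace ℝ (Fin n)) {t : ℝ} (ht : 0 < t) :
    0 ≤ heatKernel n x t := by
  unfold heatKernel; positivity

lemma heatKernel_measurable (n : ℕ) :
    Measurable (fun q : EuclideanSpace ℝ (Fin n) × ℝ => heatKernel n q.1 q.2) := by
  unfold heatKernel; fun_prop

lemma heatKernel_int (n : ℕ) {t : ℝ} (ht : 0 < t) :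
    ∫⁻ x : EuclideanSpace ℝ (Fin n), ENNReal.ofReal (heatKernel n x t) = 1 := by
  have hb : 0 < 1 / (4 * t) := by positivity
  have h1 := GaussianFourier.integral_rexp_neg_mul_sq_norm (V := EuclideanSpace ℝ (Fin n)) hb
  have h2 : (fun x : EuclideanSpace ℝ (Fin n) => heatKernel n x t) =
      fun x => (4 * Real.pi * t) ^ (-(n : ℝ) / 2) * Real.exp (-(1 / (4 * t)) * ‖x‖ ^ 2) := by
    funext x; unfold heatKernel; congr 2; field_simp
  have hpos : 0 < (Real.pi / (1 / (4 * t))) ^ ((Module.finrank ℝ (EuclideanSpace ℝ (Fin n)) : ℝ) / 2) := by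
    positivity
  have hi : Integrable (fun x : EuclideanSpace ℝ (Fin n) => heatKernel n x t) := by
    rw [h2]
    apply Integrable.const_mul
    by_contra hcon
    rw [integral_undef hcon] at h1
    exact absurd h1 hpos.ne
  rw [← ofReal_integral_eq_lintegral_ofReal hi
    (Filter.Eventually.of_forall fun x => heatKernel_nonneg n x ht), h2, integral_const_mul, h1]
  have : Real.pi / (1 / (4 * t)) = 4 * Real.pi * t := by field_simp
  rw [this, finrank_euclideanSpace_fin, ← Real.rpow_add (by positivity)]
  have : -(n : ℝ) / 2 + (n : ℝ) / 2 = 0 := by ring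
  simp [this]

lemma heatS_eq (n : ℕ) (f : EuclideanSpace ℝ (Fin n) → ℝ≥0∞)
    (x : EuclideanSpace ℝ (Fin n)) (t : ℝ) :
    heatS n f x t = ∫⁻ w, ENNReal.ofReal (heatKernel n w t) * f (x - w) := by
  unfold heatS
  rw [← lintegral_sub_left_eq_self (fun w => ENNReal.ofReal (heatKernel n w t) * f (x - w)) x]
  simp

lemma heatS_mono (n : ℕ) {f g : EuclideanSpace ℝ (Fin n) → ℝ≥0∞} (h : ∀ y, f y ≤ g y)
    (x : EuclideanSpace ℝ (Fin n)) (t : ℝ) : heatS n f x t ≤ heatS n g x t :=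
  lintegral_mono fun y => by gcongr; exact h y

lemma heatS_le_sup (n : ℕ) {f : EuclideanSpace ℝ (Fin n) → ℝ≥0∞} {c : ℝ≥0∞} (h : ∀ y, f y ≤ c)
    (x : EuclideanSpace ℝ (Fin n)) {t : ℝ} (ht : 0 < t) : heatS n f x t ≤ c := by
  rw [heatS_eq]
  calc _ ≤ ∫⁻ w, ENNReal.ofReal (heatKernel n w t) * c :=
        lintegral_mono fun y => by gcongr; exact h _
    _ = c := by
      rw [lintegral_mul_const _ (by
        have := heatKernel_measurable n
        fun_prop), heatKernel_int n ht, one_mul]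

lemma heatS_set_le (n : ℕ) {f : EuclideanSpace ℝ (Fin n) → ℝ≥0∞} (hf : Measurable f) {c : ℝ≥0∞}
    (E : Set (EuclideanSpace ℝ (Fin n)))
    (h : ∀ w, ∫⁻ x in E, f (x - w) ≤ c) {t : ℝ} (ht : 0 < t) :
    ∫⁻ x in E, heatS n f x t ≤ c := by
  have hk := heatKernel_measurable n
  simp_rw [heatS_eq]
  rw [lintegral_lintegral_swap (by fun_prop)]
  calc _ = ∫⁻ w, ENNReal.ofReal (heatKernel n w t) * ∫⁻ x in E, f (x - w) := by
        congr 1; funext w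
        rw [lintegral_const_mul _ (by fun_prop)]
    _ ≤ ∫⁻ w, ENNReal.ofReal (heatKernel n w t) * c :=
        lintegral_mono fun y => by gcongr; exact h _
    _ = c := by
      rw [lintegral_mul_const _ (by fun_prop), heatKernel_int n ht, one_mul]

lemma shift_set (n : ℕ) (f : EuclideanSpace ℝ (Fin n) → ℝ≥0∞)
    (E : Set (EuclideanSpace ℝ (Fin n))) (hE : MeasurableSet E) (w : EuclideanSpace ℝ (Fin n)) :
    ∫⁻ x in E, f (x - w) = ∫⁻ x in (fun x => x + w) ⁻¹' E, f x := by
  rw [← lintegral_indicator hE, ← lintegral_indicator (hE.preimage (measurable_add_const w)),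
    ← lintegral_add_right_eq_self _ w]
  congr 1; funext x
  by_cases h : x + w ∈ E
  · rw [indicator_of_mem h, indicator_of_mem (by exact h), add_sub_cancel_right]
  · rw [indicator_of_notMem h, indicator_of_notMem (by exact h)]

lemma heatS_smoothing (n : ℕ) (hn : 1 ≤ n) : ∃ C : ℝ, 0 < C ∧
    ∀ (f : EuclideanSpace ℝ (Fin n) → ℝ≥0∞), Measurable f → ∀ (c : ℝ≥0∞) (t : ℝ), 0 < t →
      (∀ z, ∫⁻ y in Metric.ball z (Real.sqrt t), f y ≤ c) →
      ∀ x, heatS n f x t ≤ ENNReal.ofReal (C * t ^ (-((n : ℝ) / 2))) * c := by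
  have hne : Nonempty (Fin n) := ⟨⟨0, hn⟩⟩
  set ω := (volume (Metric.ball (0 : EuclideanSpace ℝ (Fin n)) 1)).toReal with hω
  have hωpos : 0 < ω := ENNReal.toReal_pos (Metric.measure_ball_pos _ _ one_pos).ne'
    measure_ball_lt_top.ne
  refine ⟨Real.exp (1/4) * 2 ^ ((n : ℝ) / 2) * ω⁻¹, by positivity, fun f hf c t ht hc x => ?_⟩
  have hk := heatKernel_measurable n
  set r := Real.sqrt t with hr
  have hrpos : 0 < r := Real.sqrt_pos.2 ht
  have hvol : ∀ y : EuclideanSpace ℝ (Fin n), volume (Metric.ball y r) =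
      ENNReal.ofReal (t ^ ((n : ℝ) / 2) * ω) := by
    intro y
    rw [Measure.addHaar_ball _ _ hrpos.le, finrank_euclideanSpace_fin,
      ENNReal.ofReal_mul (by positivity), hω, ENNReal.ofReal_toReal measure_ball_lt_top.ne]
    congr 2
    rw [hr, Real.sqrt_eq_rpow, ← Real.rpow_natCast, ← Real.rpow_mul ht.le]; congr 1; ring
  set V := t ^ ((n : ℝ) / 2) * ω with hV
  have hVpos : 0 < V := by positivity
  set B := Real.exp (1/4) * 2 ^ ((n : ℝ) / 2) with hB
  have hBpos : 0 < B := by positivity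
  -- pointwise comparison
  have hpt : ∀ y z : EuclideanSpace ℝ (Fin n), z ∈ Metric.ball y r →
      heatKernel n (x - y) t ≤ B * heatKernel n (x - z) (2 * t) := by
    intro y z hz
    have h1 : ‖x - z‖ ^ 2 ≤ 2 * ‖x - y‖ ^ 2 + 2 * t := by
      have h2 : ‖x - z‖ ≤ ‖x - y‖ + ‖y - z‖ := by
        have := norm_add_le (x - y) (y - z); simpa using this
      have h3 : ‖y - z‖ < r := by
        rw [← dist_eq_norm, dist_comm]; exact hz
      have h4 : r ^ 2 = t := Real.sq_sqrt ht.le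
      have h5 := norm_nonneg (y - z)
      have h6 := norm_nonneg (x - z)
      nlinarith [sq_nonneg (‖x - y‖ - ‖y - z‖)]
    unfold heatKernel
    have e1 : (4 * Real.pi * (2 * t)) ^ (-(n : ℝ) / 2) =
        (2 ^ ((n : ℝ) / 2))⁻¹ * (4 * Real.pi * t) ^ (-(n : ℝ) / 2) := by
      rw [show 4 * Real.pi * (2 * t) = 2 * (4 * Real.pi * t) by ring,
        Real.mul_rpow (by norm_num) (by positivity), neg_div, Real.rpow_neg (by norm_num)]
    have e2 : B * ((4 * Real.pi * (2 * t)) ^ (-(n : ℝ) / 2) * Real.exp (-‖x - z‖ ^ 2 / (4 * (2 * t))))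
        = (4 * Real.pi * t) ^ (-(n : ℝ) / 2) *
          Real.exp (1 / 4 + (-‖x - z‖ ^ 2 / (4 * (2 * t)))) := by
      rw [e1, hB, Real.exp_add]; field_simp
    rw [e2]
    gcongr
    rw [div_add_div _ _ (by norm_num) (by positivity), div_le_div_iff₀ (by positivity) (by positivity)]
    nlinarith [mul_le_mul_of_nonneg_left h1 ht.le]
  -- average
  have hav : ∀ y, ENNReal.ofReal V * ENNReal.ofReal (heatKernel n (x - y) t) ≤
      ∫⁻ z in Metric.ball y r, ENNReal.ofReal (B * heatKernel n (x - z) (2 * t)) := by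
    intro y
    rw [← hvol y, mul_comm, ← setLIntegral_const]
    apply setLIntegral_mono' Metric.isOpen_ball.measurableSet
    intro z hz
    exact ENNReal.ofReal_le_ofReal (hpt y z hz)
  have hind : ∀ (y : EuclideanSpace ℝ (Fin n)) (g : EuclideanSpace ℝ (Fin n) → ℝ≥0∞),
      ∫⁻ z in Metric.ball y r, g z =
      ∫⁻ z, ({q : EuclideanSpace ℝ (Fin n) × EuclideanSpace ℝ (Fin n) | dist q.1 q.2 < r}.indicator 1
        (z, y)) * g z := by
    intro y g
    rw [← lintegral_indicator Metric.isOpen_ball.measurableSet]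
    congr 1; funext z
    by_cases h : dist z y < r <;> simp [indicator, h]
  have hms : MeasurableSet {q : EuclideanSpace ℝ (Fin n) × EuclideanSpace ℝ (Fin n) | dist q.1 q.2 < r} :=
    measurableSet_lt (by fun_prop) (by fun_prop)
  set χ : EuclideanSpace ℝ (Fin n) × EuclideanSpace ℝ (Fin n) → ℝ≥0∞ :=
    {q : EuclideanSpace ℝ (Fin n) × EuclideanSpace ℝ (Fin n) | dist q.1 q.2 < r}.indicator 1 with hχ
  have hχm : Measurable χ := measurable_one.indicator hms
  have hχs : ∀ y z, χ (y, z) = χ (z, y) := by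
    intro y z; simp [hχ, indicator, dist_comm]
  have main : ENNReal.ofReal V * heatS n f x t ≤ ENNReal.ofReal B * c := by
    unfold heatS
    calc ENNReal.ofReal V * ∫⁻ y, ENNReal.ofReal (heatKernel n (x - y) t) * f y
        = ∫⁻ y, ENNReal.ofReal V * ENNReal.ofReal (heatKernel n (x - y) t) * f y := by
          rw [← lintegral_const_mul' _ _ ENNReal.ofReal_ne_top]; simp_rw [mul_assoc]
      _ ≤ ∫⁻ y, (∫⁻ z, χ (z, y) * ENNReal.ofReal (B * heatKernel n (x - z) (2 * t))) * f y := by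
          apply lintegral_mono; intro y
          dsimp only
          rw [← hind]
          gcongr
          exact hav y
      _ = ∫⁻ y, ∫⁻ z, χ (z, y) * ENNReal.ofReal (B * heatKernel n (x - z) (2 * t)) * f y := by
          congr 1; funext y
          rw [lintegral_mul_const _ (by fun_prop)]
      _ = ∫⁻ z, ∫⁻ y, χ (z, y) * ENNReal.ofReal (B * heatKernel n (x - z) (2 * t)) * f y := by
          rw [lintegral_lintegral_swap (by fun_prop)]
      _ = ∫⁻ z, ENNReal.ofReal (B * heatKernel n (x - z) (2 * t)) * ∫⁻ y, χ (y, z) * f y := by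
          congr 1; funext z
          rw [← lintegral_const_mul' _ _ ENNReal.ofReal_ne_top]
          congr 1; funext y
          rw [hχs y z]; ring
      _ ≤ ∫⁻ z, ENNReal.ofReal B * ENNReal.ofReal (heatKernel n (x - z) (2 * t)) * c := by
          apply lintegral_mono; intro z
          dsimp only
          rw [← hind, ENNReal.ofReal_mul hBpos.le]
          gcongr
          exact hc z
      _ = ENNReal.ofReal B * heatS n (fun _ => c) x (2 * t) := by
          unfold heatS
          rw [← lintegral_const_mul' _ _ ENNReal.ofReal_ne_top]; simp_rw [mul_assoc]
      _ ≤ ENNReal.ofReal B * c := by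
          gcongr
          exact heatS_le_sup n (fun _ => le_rfl) x (by positivity)
  have hVi : ENNReal.ofReal V⁻¹ * ENNReal.ofReal V = 1 := by
    rw [← ENNReal.ofReal_mul (by positivity), inv_mul_cancel₀ hVpos.ne', ENNReal.ofReal_one]
  calc heatS n f x t = ENNReal.ofReal V⁻¹ * (ENNReal.ofReal V * heatS n f x t) := by
        rw [← mul_assoc, hVi, one_mul]
    _ ≤ ENNReal.ofReal V⁻¹ * (ENNReal.ofReal B * c) := by gcongr
    _ = _ := by
      rw [← mul_assoc, ← ENNReal.ofReal_mul (by positivity)]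
      congr 2
      rw [hV, Real.rpow_neg ht.le, mul_inv]; ring


/-- small-set bound -/
def SetB (n : ℕ) (T M : ℝ) (f : EuclideanSpace ℝ (Fin n) → ℝ≥0∞) : Prop :=
  ∀ (z : EuclideanSpace ℝ (Fin n)) (E : Set (EuclideanSpace ℝ (Fin n))), MeasurableSet E →
    E ⊆ Metric.ball z (Real.sqrt T) → 0 < volume E →
    ∫⁻ x in E, f x ≤ ENNReal.ofReal (M * logFac (volume E).toReal ^ (-((n : ℝ) / 2)))

def SupB (n : ℕ) (M t : ℝ) (f : EuclideanSpace ℝ (Fin n) → ℝ≥0∞) : Prop :=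
  ∀ x, f x ≤ ENNReal.ofReal (M * (t ^ (-((n : ℝ) / 2)) * logFac t ^ (-((n : ℝ) / 2))))

noncomputable def heatD (n : ℕ) (g : EuclideanSpace ℝ (Fin n) → ℝ → ℝ≥0∞)
    (x : EuclideanSpace ℝ (Fin n)) (t : ℝ) : ℝ≥0∞ :=
  ∫⁻ s in Ioo 0 t, heatS n (fun y => g y s) x (t - s)

lemma vol_ball (n : ℕ) (hn : 1 ≤ n) : ∃ ω : ℝ, 0 < ω ∧ ∀ (y : EuclideanSpace ℝ (Fin n)) (t : ℝ), 0 < t →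
    volume (Metric.ball y (Real.sqrt t)) = ENNReal.ofReal (ω * t ^ ((n : ℝ) / 2)) := by
  have hne : Nonempty (Fin n) := ⟨⟨0, hn⟩⟩
  refine ⟨(volume (Metric.ball (0 : EuclideanSpace ℝ (Fin n)) 1)).toReal,
    ENNReal.toReal_pos (Metric.measure_ball_pos _ _ one_pos).ne' measure_ball_lt_top.ne, ?_⟩
  intro y t ht
  have hrpos : 0 < √t := Real.sqrt_pos.2 ht
  rw [Measure.addHaar_ball _ _ hrpos.le, finrank_euclideanSpace_fin, mul_comm,
      ENNReal.ofReal_mul (by positivity), ENNReal.ofReal_toReal measure_ball_lt_top.ne]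
  congr 2
  rw [Real.sqrt_eq_rpow, ← Real.rpow_natCast, ← Real.rpow_mul ht.le]; congr 1; ring

lemma vol_pos_of_sub {n : ℕ} {z : EuclideanSpace ℝ (Fin n)} {r : ℝ} {E : Set (EuclideanSpace ℝ (Fin n))}
    (h : E ⊆ Metric.ball z r) (hE : 0 < volume E) :
    volume E ≠ ⊤ ∧ 0 < (volume E).toReal := by
  have : volume E < ⊤ := (measure_mono h).trans_lt measure_ball_lt_top
  exact ⟨this.ne, ENNReal.toReal_pos hE.ne' this.ne⟩

lemma heatS_meas (n : ℕ) {α : Type*} [MeasurableSpace α] {g : EuclideanSpace ℝ (Fin n) → ℝ → ℝ≥0∞}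
    (hg : Measurable (Function.uncurry g)) {X : α → EuclideanSpace ℝ (Fin n)} {σ τ : α → ℝ}
    (hX : Measurable X) (hσ : Measurable σ) (hτ : Measurable τ) :
    Measurable (fun w : α => heatS n (fun y => g y (σ w)) (X w) (τ w)) := by
  unfold heatS
  have hk := heatKernel_measurable n
  apply Measurable.lintegral_prod_right' (ν := volume) (f := fun w : α ×
    EuclideanSpace ℝ (Fin n) => ENNReal.ofReal (heatKernel n (X w.1 - w.2) (τ w.1)) * g w.2 (σ w.1))
  apply Measurable.mul
  · exact (hk.comp (by fun_prop : Measurable fun w : α ×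
      EuclideanSpace ℝ (Fin n) => (X w.1 - w.2, τ w.1))).ennreal_ofReal
  · exact hg.comp (by fun_prop : Measurable fun w : α ×
      EuclideanSpace ℝ (Fin n) => (w.2, σ w.1))

lemma heatD_meas (n : ℕ) {g : EuclideanSpace ℝ (Fin n) → ℝ → ℝ≥0∞}
    (hg : Measurable (Function.uncurry g)) : Measurable (Function.uncurry (heatD n g)) := by
  have h2 : Function.uncurry (heatD n g) = fun q : EuclideanSpace ℝ (Fin n) × ℝ =>
      ∫⁻ s, {w : (EuclideanSpace ℝ (Fin n) × ℝ) × ℝ | 0 < w.2 ∧ w.2 < w.1.2}.indicator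
        (fun w => heatS n (fun y => g y w.2) w.1.1 (w.1.2 - w.2)) (q, s) := by
    funext q
    simp only [Function.uncurry, heatD]
    rw [← lintegral_indicator measurableSet_Ioo]
    rfl
  rw [h2]
  apply Measurable.lintegral_prod_right' (ν := volume)
  apply Measurable.indicator
  · exact heatS_meas n hg (by fun_prop) (by fun_prop) (by fun_prop)
  · exact (measurableSet_lt measurable_const measurable_snd).inter
      (measurableSet_lt measurable_snd (measurable_snd.comp measurable_fst))

lemma heatS_meas_x (n : ℕ) {f : EuclideanSpace ℝ (Fin n) → ℝ≥0∞} (hf : Measurable f) :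
    Measurable (Function.uncurry (heatS n f)) :=
  heatS_meas n (α := EuclideanSpace ℝ (Fin n) × ℝ) (g := fun y _ => f y) (hf.comp measurable_fst)
    (σ := fun _ => 0) measurable_fst measurable_const measurable_snd

lemma SetB.shift {n : ℕ} {T M : ℝ} {f : EuclideanSpace ℝ (Fin n) → ℝ≥0∞} (hf : Measurable f)
    (h : SetB n T M f) {t : ℝ} (ht : 0 < t) : SetB n T M (fun x => heatS n f x t) := by
  intro z E hE hEz hEp
  apply heatS_set_le n hf E _ ht
  intro w
  rw [shift_set n f E hE w]
  have hv : volume ((fun x => x + w) ⁻¹' E) = volume E := measure_preimage_add_right _ _ _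
  have := h (z - w) ((fun x => x + w) ⁻¹' E) (hE.preimage (measurable_add_const w)) ?_ (by rwa [hv])
  · rwa [hv] at this
  · intro x hx
    have h1 := hEz hx
    rw [Metric.mem_ball, dist_eq_norm] at h1 ⊢
    have e : x - (z - w) = x + w - z := by abel
    rw [e]; exact h1

lemma lin_est (n : ℕ) (hn : 1 ≤ n) : ∃ C : ℝ, 1 ≤ C ∧
    ∀ (T N : ℝ) (f : EuclideanSpace ℝ (Fin n) → ℝ≥0∞), 0 < T → 0 < N → Measurable f → SetB n T N f →
      ∀ t, 0 < t → t ≤ T → SetB n T (C * N) (fun x => heatS n f x t) ∧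
        SupB n (C * N) t (fun x => heatS n f x t) := by
  obtain ⟨ω, hω, hvol⟩ := vol_ball n hn
  obtain ⟨C1, hC1, hsm⟩ := heatS_smoothing n hn
  have ha : 0 < (n : ℝ) / 2 := by have : (1:ℝ) ≤ n := by exact_mod_cast hn
                                  linarith
  set a := (n : ℝ) / 2 with haa
  obtain ⟨K, hK, hL⟩ := lf_pow ω a hω ha
  refine ⟨max 1 (C1 * K ^ a), le_max_left _ _, fun T N f hT hN hf hB t ht htT => ⟨?_, ?_⟩⟩
  · intro z E hE hEz hEp
    refine (hB.shift hf ht z E hE hEz hEp).trans ?_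
    have := lf_pos (vol_pos_of_sub hEz hEp).2
    gcongr
    exact le_mul_of_one_le_left hN.le (le_max_left _ _)
  · intro x
    have h1 : ∀ z, ∫⁻ y in Metric.ball z (√t), f y ≤ ENNReal.ofReal (N * (K ^ a * logFac t ^ (-a))) := by
      intro z
      refine (hB z _ Metric.isOpen_ball.measurableSet (Metric.ball_subset_ball (Real.sqrt_le_sqrt htT))
        (Metric.measure_ball_pos _ _ (Real.sqrt_pos.2 ht))).trans ?_
      rw [hvol z t ht, ENNReal.toReal_ofReal (by positivity)]
      apply ENNReal.ofReal_le_ofReal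
      have p1 := lf_pos ht
      have p2 : 0 < logFac (ω * t ^ a) := lf_pos (by positivity)
      gcongr
      rw [Real.rpow_neg p2.le, Real.rpow_neg p1.le, ← div_eq_mul_inv, inv_le_comm₀ (by positivity) (by positivity),
        inv_div, div_le_iff₀ (by positivity), mul_comm, ← Real.mul_rpow (by positivity) p2.le]
      exact Real.rpow_le_rpow p1.le (hL t ht).2 ha.le
    refine (hsm f hf _ t ht h1 x).trans ?_
    rw [← ENNReal.ofReal_mul (by positivity)]
    apply ENNReal.ofReal_le_ofReal
    have p1 := lf_pos ht
    calc C1 * t ^ (-a) * (N * (K ^ a * logFac t ^ (-a))) = (C1 * K ^ a) * N * (t ^ (-a) * logFac t ^ (-a)) := by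
          ring
      _ ≤ _ := by gcongr; exact le_max_right _ _

lemma layer_est (n : ℕ) (hn : 1 ≤ n) (Ts : ℝ) (hTs : 0 < Ts) : ∃ C : ℝ, 0 < C ∧
    ∀ (T M t : ℝ) (f : EuclideanSpace ℝ (Fin n) → ℝ≥0∞), 0 < M → Measurable f → 0 < t → t ≤ T → T ≤ Ts →
      SetB n T M f → SupB n M t f → ∀ z, ∀ E ⊆ Metric.ball z (√T), MeasurableSet E →
      ∫⁻ y in E, f y ^ (1 + 2 / (n : ℝ)) ≤
        ENNReal.ofReal (C * (M ^ (1 + 2 / (n : ℝ)) * (t ^ (-1 : ℝ) * logFac t ^ (-((n : ℝ) / 2) - 1)))) := by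
  have hn' : (1:ℝ) ≤ n := by exact_mod_cast hn
  have ha : 0 < (n : ℝ) / 2 := by linarith
  have hb : (2 / (n : ℝ)) = ((n : ℝ) / 2)⁻¹ := by rw [inv_div]
  rw [hb]
  set a := (n : ℝ) / 2 with haa
  set b := a⁻¹ with hbb
  have hb0 : 0 < b := by positivity
  have hab : a * b = 1 := mul_inv_cancel₀ ha.ne'
  obtain ⟨K, hK, hL⟩ := lf_pow 1 (a / 2) one_pos (by positivity)
  obtain ⟨C2, hC2, hal⟩ := lf_almost (1 / 2) (a + 1) (by norm_num) (by positivity)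
  set D := C2 * (Ts ^ (1 / 2 : ℝ) * logFac Ts ^ (a + 1)) with hD
  have hLs := lf_pos hTs
  have hDpos : 0 < D := by positivity
  refine ⟨D + K ^ a, by positivity, fun T M t f hM hf ht htT hTTs hset hsup z E hEz hE => ?_⟩
  have hLt := lf_pos ht
  have hL1 := lf_one_le ht
  set κ := M * t ^ (-(a / 2)) with hκ
  have hκpos : 0 < κ := by positivity
  set F := E ∩ {y | ENNReal.ofReal κ < f y} with hF
  set F' := E ∩ {y | f y ≤ ENNReal.ofReal κ} with hF'
  have hFm : MeasurableSet F := hE.inter (measurableSet_lt measurable_const hf)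
  have hF'm : MeasurableSet F' := hE.inter (measurableSet_le hf measurable_const)
  have hunion : E = F' ∪ F := by
    ext y; simp only [hF, hF', mem_union, mem_inter_iff, mem_ofPred_eq]
    have := le_or_gt (f y) (ENNReal.ofReal κ)
    tauto
  have hmass : ∀ G ⊆ E, MeasurableSet G → ∫⁻ y in G, f y ≤ ENNReal.ofReal M := by
    intro G hG hGm
    rcases eq_or_ne (volume G) 0 with h0 | h0
    · rw [Measure.restrict_eq_zero.2 h0]; simp
    · have hp : 0 < volume G := pos_iff_ne_zero.2 h0
      refine (hset z G hGm (hG.trans hEz) hp).trans ?_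
      apply ENNReal.ofReal_le_ofReal
      have := lf_one_le (vol_pos_of_sub (hG.trans hEz) hp).2
      have h3 : logFac (volume G).toReal ^ (-a) ≤ 1 := Real.rpow_le_one_of_one_le_of_nonpos this (by linarith)
      nlinarith
  have hpow : ∀ (G : Set (EuclideanSpace ℝ (Fin n))) (c : ℝ), MeasurableSet G → 0 < c →
      (∀ y ∈ G, f y ≤ ENNReal.ofReal c) →
      ∫⁻ y in G, f y ^ (1 + b) ≤ ENNReal.ofReal (c ^ b) * ∫⁻ y in G, f y := by
    intro G c hG hc h
    rw [← lintegral_const_mul' _ _ ENNReal.ofReal_ne_top]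
    apply setLIntegral_mono' hG
    intro y hy
    rw [ENNReal.rpow_add_of_nonneg _ _ zero_le_one hb0.le, ENNReal.rpow_one, mul_comm,
      ← ENNReal.ofReal_rpow_of_pos hc]
    gcongr
    exact h y hy
  have hM1 : M ^ (1 + b) = M * M ^ b := by rw [Real.rpow_add hM, Real.rpow_one]
  -- low part
  have low : ∫⁻ y in F', f y ^ (1 + b) ≤
      ENNReal.ofReal (D * (M ^ (1 + b) * (t ^ (-1 : ℝ) * logFac t ^ (-a - 1)))) := by
    refine (hpow F' κ hF'm hκpos (fun y hy => hy.2)).trans ?_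
    refine (mul_le_mul_right (hmass F' inter_subset_left hF'm) _).trans ?_
    rw [← ENNReal.ofReal_mul (by positivity)]
    apply ENNReal.ofReal_le_ofReal
    have h1 := hal t Ts ht (htT.trans hTTs)
    have e1 : κ ^ b = M ^ b * t ^ (-(1/2) : ℝ) := by
      rw [hκ, Real.mul_rpow hM.le (by positivity), ← Real.rpow_mul ht.le]
      congr 2; rw [neg_mul, div_mul_eq_mul_div, hab]
    have e2 : t ^ (-(1/2) : ℝ) = t ^ (-1 : ℝ) * t ^ (1/2 : ℝ) := by
      rw [← Real.rpow_add ht]; norm_num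
    have e3 : logFac t ^ (-a - 1) = (logFac t ^ (a + 1))⁻¹ := by
      rw [← Real.rpow_neg hLt.le]; congr 1; ring
    rw [e1, e2, e3, hM1]
    have h2 : t ^ (1/2 : ℝ) ≤ D * (logFac t ^ (a + 1))⁻¹ := by
      rw [← div_eq_mul_inv, le_div_iff₀ (by positivity)]; exact h1
    calc M ^ b * (t ^ (-1 : ℝ) * t ^ (1/2 : ℝ)) * M ≤
        M ^ b * (t ^ (-1 : ℝ) * (D * (logFac t ^ (a + 1))⁻¹)) * M := by gcongr
      _ = _ := by ring
  -- high part
  have high : ∫⁻ y in F, f y ^ (1 + b) ≤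
      ENNReal.ofReal (K ^ a * (M ^ (1 + b) * (t ^ (-1 : ℝ) * logFac t ^ (-a - 1)))) := by
    rcases eq_or_ne (volume F) 0 with h0 | h0
    · rw [Measure.restrict_eq_zero.2 h0]; simp
    have hp : 0 < volume F := pos_iff_ne_zero.2 h0
    have hFz : F ⊆ Metric.ball z (√T) := inter_subset_left.trans hEz
    obtain ⟨hfin, hvp⟩ := vol_pos_of_sub hFz hp
    have hvF : (volume F).toReal ≤ t ^ (a / 2) := by
      have h1 : ENNReal.ofReal κ * volume F ≤ ENNReal.ofReal M := by
        refine le_trans ?_ (hmass F inter_subset_left hFm)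
        rw [← setLIntegral_const]
        exact setLIntegral_mono' hFm (fun y hy => le_of_lt hy.2)
      rw [← ENNReal.ofReal_toReal hfin, ← ENNReal.ofReal_mul hκpos.le,
        ENNReal.ofReal_le_ofReal_iff hM.le, hκ, Real.rpow_neg ht.le, mul_assoc] at h1
      have h2 := le_of_mul_le_mul_left (h1.trans_eq (mul_one M).symm) hM
      rwa [inv_mul_le_iff₀ (by positivity), mul_one] at h2
    have hLF : logFac t ≤ K * logFac (volume F).toReal := by
      have := (hL t ht).2
      rw [one_mul] at this
      exact this.trans (by gcongr; exact lf_anti hvp hvF)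
    have hLFp := lf_pos hvp
    refine (hpow F (M * (t ^ (-a) * logFac t ^ (-a))) hFm (by positivity) (fun y _ => hsup y)).trans ?_
    refine (mul_le_mul_right (hset z F hFm hFz hp) _).trans ?_
    rw [← ENNReal.ofReal_mul (by positivity)]
    apply ENNReal.ofReal_le_ofReal
    have e1 : (M * (t ^ (-a) * logFac t ^ (-a))) ^ b = M ^ b * (t ^ (-1 : ℝ) * logFac t ^ (-1 : ℝ)) := by
      rw [Real.mul_rpow hM.le (by positivity), Real.mul_rpow (by positivity) (by positivity),
        ← Real.rpow_mul ht.le, ← Real.rpow_mul hLt.le, neg_mul, hab]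
    have e2 : logFac t ^ (-a - 1) = logFac t ^ (-1 : ℝ) * logFac t ^ (-a) := by
      rw [← Real.rpow_add hLt]; congr 1; ring
    have h3 : logFac (volume F).toReal ^ (-a) ≤ K ^ a * logFac t ^ (-a) := by
      rw [Real.rpow_neg hLFp.le, Real.rpow_neg hLt.le, ← div_eq_mul_inv, inv_le_comm₀ (by positivity) (by positivity),
        inv_div, div_le_iff₀ (by positivity), mul_comm, ← Real.mul_rpow (by positivity) hLFp.le]
      exact Real.rpow_le_rpow hLt.le hLF ha.le
    rw [e1, e2, hM1]
    calc _ ≤ M ^ b * (t ^ (-1 : ℝ) * logFac t ^ (-1 : ℝ)) * (M * (K ^ a * logFac t ^ (-a))) := by gcongr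
      _ = _ := by ring
  rw [hunion]
  refine (lintegral_union_le _ _ _).trans ((add_le_add low high).trans ?_)
  rw [← ENNReal.ofReal_add (by positivity) (by positivity), ← add_mul]


lemma pg_est (n : ℕ) (hn : 1 ≤ n) (Ts : ℝ) (hTs : 0 < Ts) (γ : ℝ) (hγ : 0 ≤ γ) : ∃ C : ℝ, 0 < C ∧
    ∀ (T M t : ℝ) (f : EuclideanSpace ℝ (Fin n) → ℝ≥0∞), 0 < M → Measurable f → 0 < t → t ≤ T → T ≤ Ts →
      SetB n T M f → SupB n M t f → ∀ z, ∀ E ⊆ Metric.ball z (√T), MeasurableSet E → 0 < volume E →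
      ENNReal.ofReal (logFac (volume E).toReal) ^ γ * ∫⁻ y in E, f y ^ (1 + 2 / (n : ℝ)) ≤
        ENNReal.ofReal (C * (M ^ (1 + 2 / (n : ℝ)) *
          (t ^ (-1 : ℝ) * logFac t ^ (-((n : ℝ) / 2) - 1 + γ)))) := by
  obtain ⟨C1, hC1, hlay⟩ := layer_est n hn Ts hTs
  have hn' : (1:ℝ) ≤ n := by exact_mod_cast hn
  have ha : 0 < (n : ℝ) / 2 := by linarith
  have hb : (2 / (n : ℝ)) = ((n : ℝ) / 2)⁻¹ := by rw [inv_div]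
  rw [hb] at hlay ⊢
  set a := (n : ℝ) / 2 with haa
  set b := a⁻¹ with hbb
  have hb0 : 0 < b := by positivity
  have hab : a * b = 1 := mul_inv_cancel₀ ha.ne'
  obtain ⟨K, hK, hL⟩ := lf_pow 1 a one_pos ha
  obtain ⟨C2, hC2, hal⟩ := lf_almost 1 γ one_pos hγ
  refine ⟨(C1 + C2) * K ^ γ, by positivity, fun T M t f hM hf ht htT hTTs hset hsup z E hEz hE hEp => ?_⟩
  obtain ⟨hfin, hvp⟩ := vol_pos_of_sub hEz hEp
  have hLt := lf_pos ht
  set σ := (volume E).toReal with hσ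
  have hLσ := lf_pos hvp
  have hta : 0 < t ^ a := by positivity
  have hLta := lf_pos hta
  have hKt : logFac (t ^ a) ^ γ ≤ K ^ γ * logFac t ^ γ := by
    rw [← Real.mul_rpow (by positivity) hLt.le]
    have := (hL t ht).1
    rw [one_mul] at this
    exact Real.rpow_le_rpow hLta.le this hγ
  rw [ENNReal.ofReal_rpow_of_pos hLσ]
  have eL : logFac t ^ (-a - 1 + γ) = logFac t ^ (-a - 1) * logFac t ^ γ := by
    rw [← Real.rpow_add hLt]
  rcases le_total (t ^ a) σ with h | h
  · refine (mul_le_mul_right (hlay T M t f hM hf ht htT hTTs hset hsup z E hEz hE) _).trans ?_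
    rw [← ENNReal.ofReal_mul (by positivity)]
    apply ENNReal.ofReal_le_ofReal
    have h1 : logFac σ ^ γ ≤ K ^ γ * logFac t ^ γ :=
      (Real.rpow_le_rpow hLσ.le (lf_anti hta h) hγ).trans hKt
    calc _ ≤ (K ^ γ * logFac t ^ γ) * (C1 * (M ^ (1 + b) * (t ^ (-1:ℝ) * logFac t ^ (-a - 1)))) := by gcongr
      _ = C1 * K ^ γ * (M ^ (1 + b) * (t ^ (-1:ℝ) * logFac t ^ (-a - 1 + γ))) := by rw [eL]; ring
      _ ≤ _ := by gcongr; linarith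
  · have h1 : ∫⁻ y in E, f y ^ (1 + b) ≤
        ENNReal.ofReal ((M * (t ^ (-a) * logFac t ^ (-a))) ^ (1 + b)) * ENNReal.ofReal σ := by
      rw [hσ, ENNReal.ofReal_toReal hfin, ← setLIntegral_const]
      apply setLIntegral_mono' hE
      intro y _
      rw [← ENNReal.ofReal_rpow_of_pos (by positivity)]
      gcongr
      exact hsup y
    refine (mul_le_mul_right h1 _).trans ?_
    rw [← ENNReal.ofReal_mul (by positivity), ← ENNReal.ofReal_mul (by positivity)]
    apply ENNReal.ofReal_le_ofReal
    have h2 := hal σ (t ^ a) hvp h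
    rw [Real.rpow_one, Real.rpow_one] at h2
    have e1 : (M * (t ^ (-a) * logFac t ^ (-a))) ^ (1 + b) =
        M ^ (1 + b) * (t ^ (-a - 1) * logFac t ^ (-a - 1)) := by
      rw [Real.mul_rpow hM.le (by positivity), Real.mul_rpow (by positivity) (by positivity),
        ← Real.rpow_mul ht.le, ← Real.rpow_mul hLt.le]
      have : -a * (1 + b) = -a - 1 := by linear_combination -hab
      rw [this]
    have e2 : t ^ (-1 : ℝ) = t ^ (-a - 1) * t ^ a := by
      rw [← Real.rpow_add ht]; congr 1; ring
    rw [e1]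
    calc _ = M ^ (1 + b) * (t ^ (-a - 1) * logFac t ^ (-a - 1)) * (σ * logFac σ ^ γ) := by ring
      _ ≤ M ^ (1 + b) * (t ^ (-a - 1) * logFac t ^ (-a - 1)) * (C2 * (t ^ a * (K ^ γ * logFac t ^ γ))) := by
          exact mul_le_mul_of_nonneg_left (h2.trans (by gcongr)) (by positivity)
      _ = C2 * K ^ γ * (M ^ (1 + b) * (t ^ (-1:ℝ) * logFac t ^ (-a - 1 + γ))) := by rw [eL, e2]; ring
      _ ≤ _ := by gcongr; linarith

lemma duh_est (n : ℕ) (hn : 1 ≤ n) (Ts : ℝ) (hTs : 0 < Ts) : ∃ C : ℝ, 0 < C ∧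
    ∀ (T A : ℝ) (g : EuclideanSpace ℝ (Fin n) → ℝ → ℝ≥0∞), 0 < T → T ≤ Ts → 0 < A →
      Measurable (Function.uncurry g) →
      (∀ s, 0 < s → s < T → ∀ z, ∫⁻ y in Metric.ball z (√T), g y s ≤
        ENNReal.ofReal (A * (s ^ (-1 : ℝ) * logFac s ^ (-((n : ℝ) / 2) - 1)))) →
      (∀ s, 0 < s → s < T → ∀ x, g x s ≤
        ENNReal.ofReal (A * (s ^ (-((n : ℝ) / 2) - 1) * logFac s ^ (-((n : ℝ) / 2) - 1)))) →
      ∀ t, 0 < t → t < T → SetB n T (C * A) (fun x => heatD n g x t) ∧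
        SupB n (C * A) t (fun x => heatD n g x t) := by
  have hn' : (1:ℝ) ≤ n := by exact_mod_cast hn
  have ha : 0 < (n : ℝ) / 2 := by linarith
  obtain ⟨Cs, hCs, hsm⟩ := heatS_smoothing n hn
  set a := (n : ℝ) / 2 with haa
  obtain ⟨C1, hC1, hI1⟩ := lf_int1 a Ts ha hTs
  obtain ⟨C2, hC2, hI2⟩ := lf_int2 a ha
  obtain ⟨K, hK, hL⟩ := lf_pow 1 a one_pos ha
  set Ca := (C1 + C2) * K ^ a with hCa
  set Cb := Cs * 2 ^ a * C1 + 2 ^ (a + 1) with hCb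
  have hCapos : 0 < Ca := by positivity
  have hCbpos : 0 < Cb := by positivity
  refine ⟨Ca + Cb, by positivity, fun T A g hT hTTs hA hg hgi hgs t ht htT => ⟨?_, ?_⟩⟩
  · intro z E hE hEz hEp
    obtain ⟨hfin, hvp⟩ := vol_pos_of_sub hEz hEp
    set σ := (volume E).toReal with hσ
    have hgs' : ∀ s, Measurable (fun y => g y s) := fun s => hg.of_uncurry_right
    -- small-time bound
    have hsmall : ∀ s, 0 < s → s < t → ∫⁻ x in E, heatS n (fun y => g y s) x (t - s) ≤
        ENNReal.ofReal A * ENNReal.ofReal (s ^ (-1 : ℝ) * logFac s ^ (-a - 1)) := by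
      intro s hs hst
      rw [← ENNReal.ofReal_mul hA.le]
      apply heatS_set_le n (hgs' s) E _ (by linarith)
      intro w
      rw [shift_set n (fun y => g y s) E hE w]
      refine le_trans ?_ (hgi s hs (hst.trans htT) (z - w))
      apply lintegral_mono_set
      intro x hx
      have h1 := hEz hx
      rw [Metric.mem_ball, dist_eq_norm] at h1 ⊢
      have e : x - (z - w) = x + w - z := by abel
      rw [e]; exact h1
    have hlarge : ∀ s, 0 < s → s < t → ∫⁻ x in E, heatS n (fun y => g y s) x (t - s) ≤
        ENNReal.ofReal (A * σ) * ENNReal.ofReal (s ^ (-a - 1) * logFac s ^ (-a - 1)) := by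
      intro s hs hst
      have h1 : ∀ x, heatS n (fun y => g y s) x (t - s) ≤ 
          ENNReal.ofReal (A * (s ^ (-a - 1) * logFac s ^ (-a - 1))) :=
        fun x => heatS_le_sup n (hgs s hs (hst.trans htT)) x (by linarith)
      refine (lintegral_mono h1).trans ?_
      rw [setLIntegral_const, ← ENNReal.ofReal_toReal hfin, ← hσ]
      have := lf_pos hs
      rw [← ENNReal.ofReal_mul (by positivity), ← ENNReal.ofReal_mul (by positivity)]
      apply le_of_eq; congr 1; ring
    have hsw : ∫⁻ x in E, heatD n g x t =
        ∫⁻ s in Ioo 0 t, ∫⁻ x in E, heatS n (fun y => g y s) x (t - s) := by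
      unfold heatD
      rw [lintegral_lintegral_swap]
      apply Measurable.aemeasurable
      exact heatS_meas n hg (α := EuclideanSpace ℝ (Fin n) × ℝ) (X := fun w => w.1) (σ := fun w => w.2)
        (τ := fun w => t - w.2) (by fun_prop) (by fun_prop) (by fun_prop)
    set r := σ ^ a⁻¹ with hr
    have hrpos : 0 < r := by positivity
    have hra : r ^ a = σ := by rw [hr, ← Real.rpow_mul hvp.le, inv_mul_cancel₀ ha.ne', Real.rpow_one]
    have hLr := lf_pos hrpos
    have hLσ := lf_pos hvp
    have hcmp : logFac r ^ (-a) ≤ K ^ a * logFac σ ^ (-a) := by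
      rw [Real.rpow_neg hLσ.le, Real.rpow_neg hLr.le, ← div_eq_mul_inv, inv_le_comm₀ (by positivity) (by positivity),
        inv_div, div_le_iff₀ (by positivity), mul_comm, ← Real.mul_rpow (by positivity) hLr.le]
      have := (hL r hrpos).1
      rw [one_mul, hra] at this
      exact Real.rpow_le_rpow hLσ.le this ha.le
    set m := min r t with hm
    have hmpos : 0 < m := lt_min hrpos ht
    have hsplit : Ioo 0 t ⊆ Ioo 0 m ∪ ({s | m ≤ s} ∩ Ioo 0 t) := by
      intro s hs
      rcases lt_or_ge s m with h | h
      · left; exact ⟨hs.1, h⟩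
      · right; exact ⟨h, hs⟩
    have hms : MeasurableSet ({s | m ≤ s} ∩ Ioo 0 t) :=
      (measurableSet_le measurable_const measurable_id).inter measurableSet_Ioo
    rw [hsw]
    refine (lintegral_mono_set hsplit).trans ((lintegral_union_le _ _ _).trans ?_)
    have p1 : ∫⁻ s in Ioo 0 m, ∫⁻ x in E, heatS n (fun y => g y s) x (t - s) ≤
        ENNReal.ofReal (A * (C1 * (K ^ a * logFac σ ^ (-a)))) := by
      have hmt : m ≤ t := min_le_right _ _
      refine (setLIntegral_mono' measurableSet_Ioo
        (fun s hs => hsmall s hs.1 (hs.2.trans_le hmt))).trans ?_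
      rw [lintegral_const_mul' _ _ ENNReal.ofReal_ne_top]
      refine (mul_le_mul_right (hI1 m hmpos (by linarith)) _).trans ?_
      rw [← ENNReal.ofReal_mul hA.le]
      apply ENNReal.ofReal_le_ofReal
      gcongr
      refine le_trans ?_ hcmp
      have := lf_anti hmpos (min_le_left r t)
      exact Real.rpow_le_rpow_of_nonpos hLr this (by linarith)
    have p2 : ∫⁻ s in ({s | m ≤ s} ∩ Ioo 0 t), ∫⁻ x in E, heatS n (fun y => g y s) x (t - s) ≤
        ENNReal.ofReal (A * (C2 * (K ^ a * logFac σ ^ (-a)))) := by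
      have hsub : ({s | m ≤ s} ∩ Ioo 0 t) ⊆ Ici r := by
        rintro s ⟨h1, h2⟩
        have h1' : m ≤ s := h1
        rcases min_le_iff.1 h1' with h | h
        · exact h
        · exact absurd h2.2 (not_lt.2 h)
      refine (setLIntegral_mono' hms (fun s hs => hlarge s hs.2.1 hs.2.2)).trans ?_
      refine (lintegral_mono_set hsub).trans ?_
      rw [lintegral_const_mul' _ _ ENNReal.ofReal_ne_top, setLIntegral_congr Ioi_ae_eq_Ici.symm]
      refine (mul_le_mul_right (hI2 r hrpos) _).trans ?_
      rw [← ENNReal.ofReal_mul (by positivity)]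
      apply ENNReal.ofReal_le_ofReal
      have e : σ * r ^ (-a) = 1 := by
        rw [Real.rpow_neg hrpos.le, hra, mul_inv_cancel₀ hvp.ne']
      calc A * σ * (C2 * (r ^ (-a) * logFac r ^ (-a))) = A * (C2 * ((σ * r ^ (-a)) * logFac r ^ (-a))) := by ring
        _ = A * (C2 * logFac r ^ (-a)) := by rw [e, one_mul]
        _ ≤ _ := by gcongr
    refine (add_le_add p1 p2).trans ?_
    rw [← ENNReal.ofReal_add (by positivity) (by positivity)]
    apply ENNReal.ofReal_le_ofReal
    calc _ = Ca * A * logFac σ ^ (-a) := by rw [hCa]; ring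
      _ ≤ _ := by gcongr; linarith
  · intro x
    have hgs' : ∀ s, Measurable (fun y => g y s) := fun s => hg.of_uncurry_right
    have hLt := lf_pos ht
    have hLt1 := lf_one_le ht
    have hsplit : Ioo 0 t ⊆ Ioo 0 (t / 2) ∪ Ico (t / 2) t := by
      intro s hs
      rcases lt_or_ge s (t / 2) with h | h
      · left; exact ⟨hs.1, h⟩
      · right; exact ⟨h, hs.2⟩
    unfold heatD
    refine (lintegral_mono_set hsplit).trans ((lintegral_union_le _ _ _).trans ?_)
    have p1 : ∫⁻ s in Ioo 0 (t / 2), heatS n (fun y => g y s) x (t - s) ≤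
        ENNReal.ofReal (Cs * 2 ^ a * C1 * A * (t ^ (-a) * logFac t ^ (-a))) := by
      have h1 : ∀ s ∈ Ioo 0 (t / 2), heatS n (fun y => g y s) x (t - s) ≤
          ENNReal.ofReal (Cs * (2 ^ a * t ^ (-a)) * A) *
            ENNReal.ofReal (s ^ (-1 : ℝ) * logFac s ^ (-a - 1)) := by
        intro s hs
        have hs0 := hs.1
        have hs2 := hs.2
        have hts : 0 < t - s := by linarith
        have hLs := lf_pos hs0
        have h2 := hsm (fun y => g y s) (hgs' s) _ (t - s) hts (fun z =>
          (lintegral_mono_set (Metric.ball_subset_ball (Real.sqrt_le_sqrt (by linarith)))).trans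
            (hgi s hs0 (by linarith) z)) x
        refine h2.trans ?_
        rw [← ENNReal.ofReal_mul (by positivity), ← ENNReal.ofReal_mul (by positivity)]
        apply ENNReal.ofReal_le_ofReal
        have h3 : (t - s) ^ (-a) ≤ 2 ^ a * t ^ (-a) := by
          have h4 : (t - s) ^ (-a) ≤ (t / 2) ^ (-a) :=
            Real.rpow_le_rpow_of_nonpos (by positivity) (by linarith) (by linarith)
          refine h4.trans (le_of_eq ?_)
          rw [Real.div_rpow ht.le (by norm_num), Real.rpow_neg (by norm_num : (0:ℝ) ≤ 2)]
          field_simp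
        calc _ ≤ Cs * (2 ^ a * t ^ (-a)) * (A * (s ^ (-1 : ℝ) * logFac s ^ (-a - 1))) := by gcongr
          _ = _ := by ring
      refine (setLIntegral_mono' measurableSet_Ioo h1).trans ?_
      rw [lintegral_const_mul' _ _ ENNReal.ofReal_ne_top]
      refine (mul_le_mul_right ((lintegral_mono_set (Ioo_subset_Ioo_right (by linarith))).trans
        (hI1 t ht (by linarith))) _).trans ?_
      rw [← ENNReal.ofReal_mul (by positivity)]
      apply ENNReal.ofReal_le_ofReal
      apply le_of_eq; ring
    have p2 : ∫⁻ s in Ico (t / 2) t, heatS n (fun y => g y s) x (t - s) ≤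
        ENNReal.ofReal (2 ^ (a + 1) * A * (t ^ (-a) * logFac t ^ (-a))) := by
      have h1 : ∀ s ∈ Ico (t / 2) t, heatS n (fun y => g y s) x (t - s) ≤
          ENNReal.ofReal (A * (2 ^ (a + 1) * t ^ (-a - 1) * logFac t ^ (-a))) := by
        intro s hs
        have hs1 := hs.1
        have hs2 := hs.2
        have hs0 : 0 < s := by linarith
        have hLs := lf_pos hs0
        refine (heatS_le_sup n (hgs s hs0 (hs2.trans htT)) x (by linarith)).trans ?_
        apply ENNReal.ofReal_le_ofReal
        have h3 : s ^ (-a - 1) ≤ 2 ^ (a + 1) * t ^ (-a - 1) := by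
          have h4 : s ^ (-a - 1) ≤ (t / 2) ^ (-a - 1) :=
            Real.rpow_le_rpow_of_nonpos (by positivity) (by linarith) (by linarith)
          refine h4.trans (le_of_eq ?_)
          have e : -a - 1 = -(a + 1) := by ring
          rw [e, Real.div_rpow ht.le (by norm_num), Real.rpow_neg (by norm_num : (0:ℝ) ≤ 2)]
          field_simp
        have h5 : logFac s ^ (-a - 1) ≤ logFac t ^ (-a) :=
          (Real.rpow_le_rpow_of_exponent_le (lf_one_le hs0) (by linarith)).trans
            (Real.rpow_le_rpow_of_nonpos hLt (lf_anti hs0 hs2.le) (by linarith))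
        gcongr
      refine (setLIntegral_mono' measurableSet_Ico h1).trans ?_
      rw [setLIntegral_const, Real.volume_Ico, ← ENNReal.ofReal_mul (by positivity)]
      apply ENNReal.ofReal_le_ofReal
      have e : t ^ (-a - 1) * t = t ^ (-a) := by
        rw [← Real.rpow_add_one ht.ne']; congr 1; ring
      calc _ = (1 / 2) * (2 ^ (a + 1) * A * ((t ^ (-a - 1) * t) * logFac t ^ (-a))) := by ring
        _ ≤ 1 * (2 ^ (a + 1) * A * ((t ^ (-a - 1) * t) * logFac t ^ (-a))) := by gcongr; norm_num
        _ = _ := by rw [e, one_mul]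
    refine (add_le_add p1 p2).trans ?_
    rw [← ENNReal.ofReal_add (by positivity) (by positivity)]
    apply ENNReal.ofReal_le_ofReal
    calc _ = Cb * A * (t ^ (-a) * logFac t ^ (-a)) := by rw [hCb]; ring
      _ ≤ _ := by gcongr; linarith


lemma nl_est (n : ℕ) (hn : 1 ≤ n) (Ts : ℝ) (hTs : 0 < Ts) : ∃ C : ℝ, 0 < C ∧
    ∀ (T M : ℝ) (U : EuclideanSpace ℝ (Fin n) → ℝ → ℝ≥0∞), 0 < T → T ≤ Ts → 0 < M →
      Measurable (Function.uncurry U) →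
      (∀ t, 0 < t → t < T → SetB n T M (fun x => U x t) ∧ SupB n M t (fun x => U x t)) →
      ∀ t, 0 < t → t < T →
        SetB n T (C * M ^ (1 + 2 / (n : ℝ))) (fun x => heatD n (fun y s => U y s ^ (1 + 2 / (n : ℝ))) x t) ∧
        SupB n (C * M ^ (1 + 2 / (n : ℝ))) t (fun x => heatD n (fun y s => U y s ^ (1 + 2 / (n : ℝ))) x t) := by
  obtain ⟨C1, hC1, h1⟩ := layer_est n hn Ts hTs
  obtain ⟨C2, hC2, h2⟩ := duh_est n hn Ts hTs
  refine ⟨C2 * (C1 + 1), by positivity, fun T M U hT hTTs hM hU hb t ht htT => ?_⟩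
  have hn' : (1:ℝ) ≤ n := by exact_mod_cast hn
  set p := 1 + 2 / (n : ℝ) with hp
  have hp0 : 0 < p := by positivity
  rw [mul_assoc]
  apply h2 T ((C1 + 1) * M ^ p) (fun y s => U y s ^ p) hT hTTs (by positivity)
    (hU.pow_const p) _ _ t ht htT
  · intro s hs hsT z
    refine (h1 T M s (fun x => U x s) hM hU.of_uncurry_right hs hsT.le hTTs (hb s hs hsT).1
      (hb s hs hsT).2 z _ subset_rfl Metric.isOpen_ball.measurableSet).trans ?_
    apply ENNReal.ofReal_le_ofReal
    have := lf_pos hs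
    rw [← mul_assoc]
    gcongr
    linarith
  · intro s hs hsT x
    have hL := lf_pos hs
    have h3 := (hb s hs hsT).2 x
    have h4 : U x s ^ p ≤ (ENNReal.ofReal (M * (s ^ (-((n : ℝ) / 2)) * logFac s ^ (-((n : ℝ) / 2))))) ^ p := by
      gcongr
    refine h4.trans ?_
    rw [ENNReal.ofReal_rpow_of_pos (by positivity)]
    apply ENNReal.ofReal_le_ofReal
    rw [Real.mul_rpow hM.le (by positivity), Real.mul_rpow (by positivity) (by positivity),
        ← Real.rpow_mul hs.le, ← Real.rpow_mul hL.le]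
    have : -((n : ℝ) / 2) * p = -((n:ℝ)/2) - 1 := by rw [hp]; field_simp; ring
    rw [this]
    gcongr
    exact le_mul_of_one_le_left (by positivity) (by linarith)

lemma SetB.add {n : ℕ} {T M M' : ℝ} {f g : EuclideanSpace ℝ (Fin n) → ℝ≥0∞} (hM : 0 ≤ M) (hM' : 0 ≤ M')
    (hfm : Measurable f) (hf : SetB n T M f) (hg : SetB n T M' g) : SetB n T (M + M') (fun x => f x + g x) := by
  intro z E hE hEz hEp
  rw [lintegral_add_left hfm]
  refine (add_le_add (hf z E hE hEz hEp) (hg z E hE hEz hEp)).trans ?_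
  have := lf_pos (vol_pos_of_sub hEz hEp).2
  rw [← ENNReal.ofReal_add (by positivity) (by positivity), ← add_mul]

lemma SupB.add {n : ℕ} {t M M' : ℝ} {f g : EuclideanSpace ℝ (Fin n) → ℝ≥0∞} (hM : 0 ≤ M) (hM' : 0 ≤ M')
    (ht : 0 < t) (hf : SupB n M t f) (hg : SupB n M' t g) : SupB n (M + M') t (fun x => f x + g x) := by
  intro x
  refine (add_le_add (hf x) (hg x)).trans ?_
  have := lf_pos ht
  rw [← ENNReal.ofReal_add (by positivity) (by positivity), ← add_mul]

lemma SetB.mono {n : ℕ} {T M M' : ℝ} {f : EuclideanSpace ℝ (Fin n) → ℝ≥0∞} (h : M ≤ M')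
    (hf : SetB n T M f) : SetB n T M' f := by
  intro z E hE hEz hEp
  refine (hf z E hE hEz hEp).trans ?_
  have := lf_pos (vol_pos_of_sub hEz hEp).2
  gcongr

lemma SupB.mono {n : ℕ} {t M M' : ℝ} {f : EuclideanSpace ℝ (Fin n) → ℝ≥0∞} (ht : 0 < t) (h : M ≤ M')
    (hf : SupB n M t f) : SupB n M' t f := by
  intro x
  refine (hf x).trans ?_
  have := lf_pos ht
  gcongr

noncomputable def itSeq (n : ℕ) (h : EuclideanSpace ℝ (Fin n) → ℝ → ℝ≥0∞)
    (G : EuclideanSpace ℝ (Fin n) → ℝ → ℝ≥0∞ → ℝ≥0∞) : ℕ → EuclideanSpace ℝ (Fin n) → ℝ → ℝ≥0∞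
  | 0 => fun _ _ => 0
  | k + 1 => fun x t => h x t + heatD n (fun y s => G y s (itSeq n h G k y s)) x t

lemma heatD_mono (n : ℕ) {f g : EuclideanSpace ℝ (Fin n) → ℝ → ℝ≥0∞} (x : EuclideanSpace ℝ (Fin n)) (t : ℝ)
    (h : ∀ s, 0 < s → s < t → ∀ y, f y s ≤ g y s) :
    heatD n f x t ≤ heatD n g x t :=
  setLIntegral_mono' measurableSet_Ioo fun s hs => heatS_mono n (h s hs.1 hs.2) x _

lemma itSeq_meas (n : ℕ) {h : EuclideanSpace ℝ (Fin n) → ℝ → ℝ≥0∞}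
    {G : EuclideanSpace ℝ (Fin n) → ℝ → ℝ≥0∞ → ℝ≥0∞} (hh : Measurable (Function.uncurry h))
    (hGm : ∀ v : EuclideanSpace ℝ (Fin n) → ℝ → ℝ≥0∞, Measurable (Function.uncurry v) →
      Measurable (Function.uncurry fun y s => G y s (v y s))) (k : ℕ) :
    Measurable (Function.uncurry (itSeq n h G k)) := by
  induction k with
  | zero => exact measurable_const
  | succ k ih => exact hh.add (heatD_meas n (hGm _ ih))

lemma itSeq_mono (n : ℕ) {h : EuclideanSpace ℝ (Fin n) → ℝ → ℝ≥0∞}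
    {G : EuclideanSpace ℝ (Fin n) → ℝ → ℝ≥0∞ → ℝ≥0∞} 
    (hG : ∀ y s, Monotone (G y s)) (x : EuclideanSpace ℝ (Fin n)) (t : ℝ) :
    Monotone (fun k => itSeq n h G k x t) := by
  have : ∀ k x t, itSeq n h G k x t ≤ itSeq n h G (k + 1) x t := by
    intro k
    induction k with
    | zero => intro x t; exact bot_le
    | succ k ih =>
      intro x t
      change h x t + heatD n _ x t ≤ h x t + heatD n _ x t
      gcongr
      exact heatD_mono n x t fun s _ _ y => hG y s (ih y s)
  exact monotone_nat_of_le_succ fun k => this k x t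

lemma itSeq_fix (n : ℕ) {h : EuclideanSpace ℝ (Fin n) → ℝ → ℝ≥0∞}
    {G : EuclideanSpace ℝ (Fin n) → ℝ → ℝ≥0∞ → ℝ≥0∞} (hh : Measurable (Function.uncurry h))
    (hGm : ∀ v : EuclideanSpace ℝ (Fin n) → ℝ → ℝ≥0∞, Measurable (Function.uncurry v) →
      Measurable (Function.uncurry fun y s => G y s (v y s)))
    (hG : ∀ y s, Monotone (G y s)) (hGc : ∀ y s, Continuous (G y s))
    (x : EuclideanSpace ℝ (Fin n)) (t : ℝ) :
    (⨆ k, itSeq n h G k x t) = h x t + heatD n (fun y s => G y s (⨆ k, itSeq n h G k y s)) x t := by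
  have hm := itSeq_meas n hh hGm
  have hmon := itSeq_mono n (h := h) hG
  have hk := heatKernel_measurable n
  have e1 : (⨆ k, itSeq n h G k x t) = ⨆ k, itSeq n h G (k + 1) x t :=
    ((hmon x t).iSup_nat_add 1).symm
  have e2 : ∀ y s, G y s (⨆ k, itSeq n h G k y s) = ⨆ k, G y s (itSeq n h G k y s) := fun y s =>
    (hG y s).map_ciSup_of_continuousAt (hGc y s).continuousAt (OrderTop.bddAbove _)
  rw [e1]
  change (⨆ k, (h x t + heatD n (fun y s => G y s (itSeq n h G k y s)) x t)) = _
  rw [← ENNReal.add_iSup]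
  congr 1
  simp_rw [e2]
  unfold heatD
  have e3 : ∀ s, heatS n (fun y => ⨆ k, G y s (itSeq n h G k y s)) x (t - s) =
      ⨆ k, heatS n (fun y => G y s (itSeq n h G k y s)) x (t - s) := by
    intro s
    unfold heatS
    rw [← lintegral_iSup]
    · congr 1; funext y; rw [ENNReal.mul_iSup]
    · intro k
      have := (hGm _ (hm k)).of_uncurry_right (y := s)
      have h2 : Measurable fun y => heatKernel n (x - y) (t - s) :=
        hk.comp (by fun_prop : Measurable fun y : EuclideanSpace ℝ (Fin n) => (x - y, t - s))
      exact h2.ennreal_ofReal.mul this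
    · intro i j hij y
      dsimp only
      gcongr
      exact hG y s (hmon y s hij)
  simp_rw [e3]
  rw [lintegral_iSup]
  · intro k
    exact heatS_meas n (hGm _ (hm k)) (X := fun _ => x) (σ := fun s => s) (τ := fun s => t - s)
      (by fun_prop) (by fun_prop) (by fun_prop)
  · intro i j hij s
    exact heatS_mono n (fun y => hG y s (hmon y s hij)) x _

lemma exists_super (n : ℕ) (hn : 1 ≤ n) (Ts : ℝ) (hTs : 0 < Ts) : ∃ ε : ℝ, 0 < ε ∧ ∃ C : ℝ, 0 < C ∧
    ∀ (T : ℝ) (f : EuclideanSpace ℝ (Fin n) → ℝ≥0∞), 0 < T → T ≤ Ts → Measurable f →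
    ∃ U : EuclideanSpace ℝ (Fin n) → ℝ → ℝ≥0∞, Measurable (Function.uncurry U) ∧
      (∀ x t, U x t = heatS n f x t + heatD n (fun y s => U y s ^ (1 + 2 / (n : ℝ))) x t) ∧
      ∀ N, 0 < N → N ≤ ε → SetB n T N f → ∀ t, 0 < t → t < T →
        SetB n T (C * N) (fun x => U x t) ∧ SupB n (C * N) t (fun x => U x t) := by
  obtain ⟨C1, hC1, h1⟩ := lin_est n hn
  obtain ⟨C2, hC2, h2⟩ := nl_est n hn Ts hTs
  have hn' : (1:ℝ) ≤ n := by exact_mod_cast hn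
  set b := 2 / (n : ℝ) with hb
  have hb0 : 0 < b := by positivity
  set p := 1 + b with hp
  have hp0 : 0 < p := by positivity
  have hC1' : 0 < C1 := by linarith
  set ε := (C1 / (C2 * (2 * C1) ^ p)) ^ b⁻¹ with hε
  refine ⟨ε, by positivity, 2 * C1, by positivity, fun T f hT hTTs hf => ?_⟩
  set G : EuclideanSpace ℝ (Fin n) → ℝ → ℝ≥0∞ → ℝ≥0∞ := fun _ _ v => v ^ p with hG
  set h := heatS n f with hh
  have hhm : Measurable (Function.uncurry h) := heatS_meas_x n hf
  have hGm : ∀ v : EuclideanSpace ℝ (Fin n) → ℝ → ℝ≥0∞, Measurable (Function.uncurry v) →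
      Measurable (Function.uncurry fun y s => G y s (v y s)) := fun v hv => hv.pow_const p
  have hGmono : ∀ y s, Monotone (G y s) := fun y s => ENNReal.monotone_rpow_of_nonneg hp0.le
  have hGc : ∀ y s, Continuous (G y s) := fun y s => ENNReal.continuous_rpow_const
  have hm := itSeq_meas n hhm hGm
  refine ⟨fun x t => ⨆ k, itSeq n h G k x t, ?_, ?_, ?_⟩
  · exact Measurable.iSup hm
  · exact fun x t => itSeq_fix n hhm hGm hGmono hGc x t
  · intro N hN hNε hset
    have hsmall : C1 * N + C2 * (2 * C1 * N) ^ p ≤ 2 * C1 * N := by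
      have e1 : N ^ b ≤ C1 / (C2 * (2 * C1) ^ p) := by
        have := Real.rpow_le_rpow hN.le hNε hb0.le
        rwa [hε, ← Real.rpow_mul (by positivity), inv_mul_cancel₀ hb0.ne', Real.rpow_one] at this
      rw [le_div_iff₀ (by positivity)] at e1
      have e2 : (2 * C1 * N) ^ p = (2 * C1) ^ p * (N * N ^ b) := by
        rw [Real.mul_rpow (by positivity) hN.le, hp, Real.rpow_add hN, Real.rpow_one]
      rw [e2]
      nlinarith [mul_le_mul_of_nonneg_left e1 hN.le]
    have hk : ∀ k, ∀ t, 0 < t → t < T → SetB n T (2 * C1 * N) (fun x => itSeq n h G k x t) ∧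
        SupB n (2 * C1 * N) t (fun x => itSeq n h G k x t) := by
      intro k
      induction k with
      | zero =>
        intro t ht htT
        exact ⟨fun z E _ _ _ => by simp [itSeq], fun x => by simp [itSeq]⟩
      | succ k ih =>
        intro t ht htT
        have a1 := h1 T N f hT hN hf hset t ht htT.le
        have a2 := h2 T (2 * C1 * N) (itSeq n h G k) hT hTTs (by positivity) (hm k) ih t ht htT
        exact ⟨(SetB.add (by positivity) (by positivity) hhm.of_uncurry_right a1.1 a2.1).mono hsmall,
          (SupB.add (by positivity) (by positivity) ht a1.2 a2.2).mono ht hsmall⟩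
    intro t ht htT
    constructor
    · intro z E hE hEz hEp
      rw [lintegral_iSup (fun k => (hm k).of_uncurry_right)
        (fun i j hij x => itSeq_mono n hGmono x t hij)]
      exact iSup_le fun k => (hk k t ht htT).1 z E hE hEz hEp
    · intro x
      exact iSup_le fun k => (hk k t ht htT).2 x


lemma int_diff {α : Type*} [MeasurableSpace α] {μ : Measure α} {A B : α → ℝ≥0∞} {w : α → ℝ}
    (hA : AEMeasurable A μ) (hB : AEMeasurable B μ) (hA' : ∫⁻ x, A x ∂μ ≠ ⊤) (hB' : ∫⁻ x, B x ∂μ ≠ ⊤)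
    (hw : w =ᵐ[μ] fun x => (A x).toReal - (B x).toReal) :
    Integrable w μ ∧ ∫ x, w x ∂μ = (∫⁻ x, A x ∂μ).toReal - (∫⁻ x, B x ∂μ).toReal := by
  have i1 := integrable_toReal_of_lintegral_ne_top hA hA'
  have i2 := integrable_toReal_of_lintegral_ne_top hB hB'
  refine ⟨(i1.sub i2).congr hw.symm, ?_⟩
  rw [integral_congr_ae hw, integral_sub i1 i2, integral_toReal hA (ae_lt_top' hA hA'),
    integral_toReal hB (ae_lt_top' hB hB')]

lemma G_toReal {A V : ℝ≥0∞} (hA : A ≠ ⊤) (hV : V ≠ ⊤) {p : ℝ} (hp : 0 < p) :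
    ((A ^ p - (A - V) ^ p) + (V - A) ^ p).toReal - (A ^ p).toReal =
      |V.toReal - A.toReal| ^ (p - 1) * (V.toReal - A.toReal) := by
  have hkey : ∀ x : ℝ, 0 ≤ x → x ^ (p - 1) * x = x ^ p := by
    intro x hx
    rcases hx.eq_or_lt with h | h
    · rw [← h, mul_zero, Real.zero_rpow hp.ne']
    · rw [← Real.rpow_add_one h.ne']; congr 1; ring
  rcases le_total V A with h | h
  · have h1 : V.toReal ≤ A.toReal := ENNReal.toReal_mono hA h
    rw [tsub_eq_zero_of_le h, ENNReal.zero_rpow_of_pos hp, add_zero,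
      ENNReal.toReal_sub_of_le (ENNReal.rpow_le_rpow tsub_le_self hp.le)
        (ENNReal.rpow_ne_top_of_nonneg hp.le hA), ← ENNReal.toReal_rpow, ← ENNReal.toReal_rpow,
      ENNReal.toReal_sub_of_le h hA, abs_of_nonpos (by linarith), neg_sub]
    have := hkey (A.toReal - V.toReal) (by linarith)
    linear_combination this
  · have h1 : A.toReal ≤ V.toReal := ENNReal.toReal_mono hV h
    have hVA : V - A ≠ ⊤ := ne_top_of_le_ne_top hV tsub_le_self
    rw [tsub_eq_zero_of_le h, ENNReal.zero_rpow_of_pos hp, tsub_zero,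
      ENNReal.toReal_add (ENNReal.rpow_ne_top_of_nonneg hp.le hA)
        (ENNReal.rpow_ne_top_of_nonneg hp.le hVA), ← ENNReal.toReal_rpow, ← ENNReal.toReal_rpow,
      ENNReal.toReal_sub_of_le h hV, abs_of_nonneg (by linarith)]
    have := hkey (V.toReal - A.toReal) (by linarith)
    linear_combination -this

lemma heatD_eq_prod (n : ℕ) {g : EuclideanSpace ℝ (Fin n) → ℝ → ℝ≥0∞}
    (hg : Measurable (Function.uncurry g)) (x : EuclideanSpace ℝ (Fin n)) (t : ℝ) :
    Measurable (fun ys : EuclideanSpace ℝ (Fin n) × ℝ =>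
      ENNReal.ofReal (heatKernel n (x - ys.1) (t - ys.2)) * g ys.1 ys.2) ∧
    ∫⁻ ys : EuclideanSpace ℝ (Fin n) × ℝ,
      ENNReal.ofReal (heatKernel n (x - ys.1) (t - ys.2)) * g ys.1 ys.2
        ∂(volume.prod (volume.restrict (Set.Ioo 0 t))) = heatD n g x t := by
  have hk := heatKernel_measurable n
  have hm : Measurable (fun ys : EuclideanSpace ℝ (Fin n) × ℝ =>
      ENNReal.ofReal (heatKernel n (x - ys.1) (t - ys.2)) * g ys.1 ys.2) := by
    apply Measurable.mul _ hg
    exact (hk.comp (by fun_prop : Measurable fun ys : EuclideanSpace ℝ (Fin n) × ℝ =>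
      (x - ys.1, t - ys.2))).ennreal_ofReal
  refine ⟨hm, ?_⟩
  rw [lintegral_prod_symm' _ hm]
  rfl

lemma exists_signed (n : ℕ) (p T : ℝ) (hp : 0 < p) (φ : EuclideanSpace ℝ (Fin n) → ℝ)
    (hφ : Measurable φ) (U : EuclideanSpace ℝ (Fin n) → ℝ → ℝ≥0∞) (hU : Measurable (Function.uncurry U))
    (hUeq : ∀ x t, U x t = heatS n (fun y => ENNReal.ofReal |φ y|) x t + heatD n (fun y s => U y s ^ p) x t)
    (hUfin : ∀ x t, 0 < t → t < T → U x t ≠ ⊤) :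
    ∃ u : EuclideanSpace ℝ (Fin n) → ℝ → ℝ, Measurable (fun q : EuclideanSpace ℝ (Fin n) × ℝ => u q.1 q.2) ∧
      (∀ x t, 0 < t → t < T → ENNReal.ofReal |u x t| ≤ U x t) ∧
      ∀ x t, 0 < t → t < T → 
        Integrable (fun y => heatKernel n (x - y) t * φ y) volume ∧
        Integrable (fun ys : EuclideanSpace ℝ (Fin n) × ℝ =>
          heatKernel n (x - ys.1) (t - ys.2) * (|u ys.1 ys.2| ^ (p - 1) * u ys.1 ys.2))
          (volume.prod (volume.restrict (Set.Ioo 0 t))) ∧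
        u x t = (∫ y, heatKernel n (x - y) t * φ y) +
          ∫ s in Set.Ioo 0 t, ∫ y,
            heatKernel n (x - y) (t - s) * (|u y s| ^ (p - 1) * u y s) := by
  have hk := heatKernel_measurable n
  set W : EuclideanSpace ℝ (Fin n) → ℝ → ℝ≥0∞ := fun x t => if 0 < t ∧ t < T then U x t else 0 with hW
  have hWU : ∀ x t, 0 < t → t < T → W x t = U x t := fun x t h1 h2 => by simp [hW, h1, h2]
  have hWm : Measurable (Function.uncurry W) := by
    have hs : MeasurableSet {q : EuclideanSpace ℝ (Fin n) × ℝ | 0 < q.2 ∧ q.2 < T} :=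
      (measurableSet_lt measurable_const measurable_snd).inter
        (measurableSet_lt measurable_snd measurable_const)
    exact Measurable.ite hs hU measurable_const
  have hWfin : ∀ x t, W x t ≠ ⊤ := by
    intro x t
    by_cases h : 0 < t ∧ t < T
    · rw [hWU x t h.1 h.2]; exact hUfin x t h.1 h.2
    · simp [hW, h]
  set G : EuclideanSpace ℝ (Fin n) → ℝ → ℝ≥0∞ → ℝ≥0∞ :=
    fun y s v => (W y s ^ p - (W y s - v) ^ p) + (v - W y s) ^ p with hG
  set h : EuclideanSpace ℝ (Fin n) → ℝ → ℝ≥0∞ := fun x t => 2 * heatS n (fun y => ENNReal.ofReal (φ y)) x t with hh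
  have hhm : Measurable (Function.uncurry h) := (heatS_meas_x n hφ.ennreal_ofReal).const_mul 2
  have hGm : ∀ v : EuclideanSpace ℝ (Fin n) → ℝ → ℝ≥0∞, Measurable (Function.uncurry v) →
      Measurable (Function.uncurry fun y s => G y s (v y s)) := fun v hv =>
    ((hWm.pow_const p).sub ((hWm.sub hv).pow_const p)).add ((hv.sub hWm).pow_const p)
  have hGmono : ∀ y s, Monotone (G y s) := by
    intro y s v w hvw
    simp only [hG]
    gcongr
  have hGc : ∀ y s, Continuous (G y s) := by
    intro y s
    have c0 : Continuous fun v : ℝ≥0∞ => v ^ p := ENNReal.continuous_rpow_const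
    have c1 : Continuous fun v => (W y s - v) ^ p := c0.comp (ENNReal.continuous_sub_left (hWfin y s))
    have c2 : Continuous fun v => (v - W y s) ^ p := c0.comp (ENNReal.continuous_sub_right _)
    exact ((ENNReal.continuous_sub_left (ENNReal.rpow_ne_top_of_nonneg hp.le (hWfin y s))).comp c1).add c2
  have hm := itSeq_meas n hhm hGm
  have hfix := itSeq_fix n hhm hGm hGmono hGc
  set v : EuclideanSpace ℝ (Fin n) → ℝ → ℝ≥0∞ := fun x t => ⨆ k, itSeq n h G k x t with hv
  have hvm : Measurable (Function.uncurry v) := Measurable.iSup hm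
  -- bound v ≤ 2 U
  have hv2 : ∀ x t, 0 < t → t < T → v x t ≤ 2 * U x t := by
    intro x t ht htT
    refine iSup_le fun k => ?_
    induction k generalizing x t with
    | zero => exact bot_le
    | succ k ih =>
      change h x t + heatD n (fun y s => G y s (itSeq n h G k y s)) x t ≤ _
      rw [hUeq x t, mul_add]
      apply add_le_add
      · simp only [hh]
        gcongr
        exact heatS_mono n (fun y => ENNReal.ofReal_le_ofReal (le_abs_self _)) x t
      · have : heatD n (fun y s => G y s (itSeq n h G k y s)) x t ≤ heatD n (fun y s => 2 * U y s ^ p) x t := by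
          apply heatD_mono
          intro s hs hst y
          have h1 := ih y s hs (hst.trans htT)
          refine (hGmono y s h1).trans ?_
          simp only [hG, hWU y s hs (hst.trans htT)]
          have h2 : 2 * U y s - U y s = U y s := by
            rw [two_mul]; exact ENNReal.add_sub_cancel_right (hUfin y s hs (hst.trans htT))
          rw [h2, two_mul (U y s ^ p)]
          exact add_le_add (tsub_le_self) (le_refl (U y s ^ p))
        refine this.trans (le_of_eq ?_)
        unfold heatD heatS
        rw [← lintegral_const_mul' _ _ (by norm_num)]
        congr 1; funext s
        rw [← lintegral_const_mul' _ _ (by norm_num)]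
        congr 1; funext y
        ring
  have hvfin : ∀ x t, 0 < t → t < T → v x t ≠ ⊤ := fun x t ht htT =>
    ne_top_of_le_ne_top (ENNReal.mul_ne_top (by norm_num) (hUfin x t ht htT)) (hv2 x t ht htT)
  refine ⟨fun x t => (v x t).toReal - (W x t).toReal, ?_, ?_, ?_⟩
  · exact hvm.ennreal_toReal.sub hWm.ennreal_toReal
  · intro x t ht htT
    dsimp only
    rw [hWU x t ht htT]
    rw [ENNReal.ofReal_le_iff_le_toReal (hUfin x t ht htT), abs_le]
    have h1 := ENNReal.toReal_mono (ENNReal.mul_ne_top (by norm_num) (hUfin x t ht htT)) (hv2 x t ht htT)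
    rw [ENNReal.toReal_mul, ENNReal.toReal_ofNat] at h1
    have h2 := ENNReal.toReal_nonneg (a := v x t)
    constructor <;> linarith
  · intro x t ht htT
    have hUt := hUfin x t ht htT
    have hUe := hUeq x t
    have hVe : v x t = h x t + heatD n (fun y s => G y s (v y s)) x t := hfix x t
    have hvt := hvfin x t ht htT
    -- linear part
    have hsum : heatS n (fun y => ENNReal.ofReal |φ y|) x t =
        heatS n (fun y => ENNReal.ofReal (φ y)) x t + heatS n (fun y => ENNReal.ofReal (-φ y)) x t := by
      unfold heatS
      rw [← lintegral_add_left]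
      · congr 1; funext y
        rw [← mul_add]
        congr 1
        show ENNReal.ofReal |φ y| = ENNReal.ofReal (φ y) + ENNReal.ofReal (-φ y)
        rcases le_total 0 (φ y) with h0 | h0
        · rw [abs_of_nonneg h0, ENNReal.ofReal_of_nonpos (by linarith : -φ y ≤ 0), add_zero]
        · rw [abs_of_nonpos h0, ENNReal.ofReal_of_nonpos h0, zero_add]
      · exact ((hk.comp (by fun_prop : Measurable fun y : EuclideanSpace ℝ (Fin n) =>
          (x - y, t))).ennreal_ofReal).mul hφ.ennreal_ofReal
    set P := heatS n (fun y => ENNReal.ofReal (φ y)) x t with hP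
    set Q := heatS n (fun y => ENNReal.ofReal (-φ y)) x t with hQ
    set DU := heatD n (fun y s => U y s ^ p) x t with hDU
    set DG := heatD n (fun y s => G y s (v y s)) x t with hDG
    rw [hsum] at hUe
    have hPf : P ≠ ⊤ := ne_top_of_le_ne_top hUt (by rw [hUe, add_assoc]; exact le_self_add)
    have hQf : Q ≠ ⊤ := ne_top_of_le_ne_top hUt (by rw [hUe, add_comm P Q, add_assoc]; exact le_self_add)
    have hDUf : DU ≠ ⊤ := ne_top_of_le_ne_top hUt (by rw [hUe]; exact le_add_self)
    have hDGf : DG ≠ ⊤ := ne_top_of_le_ne_top hvt (by rw [hVe]; exact le_add_self)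
    have hkx : Measurable fun y : EuclideanSpace ℝ (Fin n) => ENNReal.ofReal (heatKernel n (x - y) t) :=
      (hk.comp (by fun_prop : Measurable fun y : EuclideanSpace ℝ (Fin n) =>
          (x - y, t))).ennreal_ofReal
    have L1 := int_diff (μ := volume) (w := fun y => heatKernel n (x - y) t * φ y)
      (hkx.mul hφ.ennreal_ofReal).aemeasurable (hkx.mul hφ.neg.ennreal_ofReal).aemeasurable hPf hQf
      (Filter.Eventually.of_forall fun y => by
        have h0 := heatKernel_nonneg n (x - y) ht
        simp only [Pi.mul_apply, ENNReal.toReal_mul, ENNReal.toReal_ofReal h0, ENNReal.toReal_ofReal', Pi.neg_apply]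
        rw [← mul_sub]
        congr 1
        rcases le_total 0 (φ y) with h0 | h0
        · rw [max_eq_left h0, max_eq_right (by linarith)]; ring
        · rw [max_eq_right h0, max_eq_left (by linarith)]; ring)
    obtain ⟨m1, e1⟩ := heatD_eq_prod n (hGm v hvm) x t
    obtain ⟨m2, e2⟩ := heatD_eq_prod n (g := fun y s => U y s ^ p) (hU.pow_const p) x t
    have L2 := int_diff (μ := volume.prod (volume.restrict (Set.Ioo 0 t)))
      (w := fun ys : EuclideanSpace ℝ (Fin n) × ℝ => heatKernel n (x - ys.1) (t - ys.2) *
        (|(v ys.1 ys.2).toReal - (W ys.1 ys.2).toReal| ^ (p - 1) *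
          ((v ys.1 ys.2).toReal - (W ys.1 ys.2).toReal)))
      m1.aemeasurable m2.aemeasurable (by rw [e1]; exact hDGf) (by rw [e2]; exact hDUf) (by
        have hae : ∀ᵐ ys : EuclideanSpace ℝ (Fin n) × ℝ ∂(volume.prod (volume.restrict (Set.Ioo 0 t))),
            ys.2 ∈ Ioo 0 t :=
          Measure.quasiMeasurePreserving_snd.ae (ae_restrict_mem measurableSet_Ioo)
        filter_upwards [hae] with ys hys
        have h0 := heatKernel_nonneg n (x - ys.1) (by linarith [hys.2] : 0 < t - ys.2)
        have hT' := hys.2.trans htT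
        rw [ENNReal.toReal_mul, ENNReal.toReal_mul, ENNReal.toReal_ofReal h0, ← mul_sub,
          ← G_toReal (hWfin ys.1 ys.2) (hvfin ys.1 ys.2 hys.1 hT') hp, ← hWU ys.1 ys.2 hys.1 hT'])
    refine ⟨L1.1, L2.1, ?_⟩
    have e3 := integral_prod_symm _ L2.1
    rw [L2.2, e1, e2] at e3
    rw [L1.2]
    have e4 : ∫⁻ y, ENNReal.ofReal (heatKernel n (x - y) t) * ENNReal.ofReal (φ y) = P := rfl
    have e5 : ∫⁻ y, ENNReal.ofReal (heatKernel n (x - y) t) * ENNReal.ofReal (-φ y) = Q := rfl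
    have e6 : (v x t).toReal = 2 * P.toReal + DG.toReal := by
      rw [hVe, ENNReal.toReal_add (ENNReal.mul_ne_top (by norm_num) hPf) hDGf, ENNReal.toReal_mul,
        ENNReal.toReal_ofNat]
    have e7 : (U x t).toReal = P.toReal + Q.toReal + DU.toReal := by
      rw [hUe, ENNReal.toReal_add (ENNReal.add_ne_top.2 ⟨hPf, hQf⟩) hDUf, ENNReal.toReal_add hPf hQf]
    simp only [Pi.mul_apply, Pi.neg_apply]
    rw [e4, e5]
    rw [← e3, hWU x t ht htT, e6, e7]
    ring


lemma zyg_setB (n : ℕ) (T N : ℝ) (hN : 0 < N) (φ ψ : EuclideanSpace ℝ (Fin n) → ℝ)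
    (hae : φ =ᵐ[volume] ψ)
    (h : zygNormUL n 1 ((n : ℝ) / 2) (T ^ ((1 : ℝ) / 2)) φ ≤ ENNReal.ofReal N) :
    SetB n T N (fun y => ENNReal.ofReal |ψ y|) := by
  intro z E hE hsub hpos
  obtain ⟨hfin, hpos'⟩ := vol_pos_of_sub hsub hpos
  rw [Real.sqrt_eq_rpow] at hsub
  have h1 : ENNReal.ofReal (logFac (volume E).toReal) ^ ((n : ℝ) / 2) *
      ∫⁻ x in E, ENNReal.ofReal (|(Metric.ball z (T ^ ((1 : ℝ) / 2))).indicator φ x| ^ (1 : ℝ)) ≤ ENNReal.ofReal N := by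
    refine le_trans ?_ h
    unfold zygNormUL
    refine le_trans ?_ (le_iSup _ z)
    unfold zygNorm
    refine le_trans ?_ (le_iSup _ (⟨(volume E).toReal, hpos'⟩ : Set.Ioi (0 : ℝ)))
    rw [div_one, ENNReal.rpow_one]
    gcongr
    exact le_iSup (fun E' : {E' : Set (EuclideanSpace ℝ (Fin n)) //
          MeasurableSet E' ∧ volume E' = ENNReal.ofReal (volume E).toReal} => 
          ∫⁻ x in E'.1, ENNReal.ofReal (|(Metric.ball z (T ^ ((1 : ℝ) / 2))).indicator φ x| ^ (1 : ℝ)))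
          ⟨E, hE, (ENNReal.ofReal_toReal hfin).symm⟩
  have h2 : ∫⁻ x in E, ENNReal.ofReal (|(Metric.ball z (T ^ ((1 : ℝ) / 2))).indicator φ x| ^ (1 : ℝ))
      = ∫⁻ x in E, ENNReal.ofReal |ψ x| := by
    apply setLIntegral_congr_fun_ae hE
    filter_upwards [hae] with x hx hxE
    rw [Set.indicator_of_mem (hsub hxE), hx, Real.rpow_one]
  rw [h2] at h1
  have hl := lf_pos hpos'
  rw [ENNReal.ofReal_rpow_of_pos hl] at h1
  have hL : 0 < logFac (volume E).toReal ^ ((n : ℝ) / 2) := Real.rpow_pos_of_pos hl _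
  rw [Real.rpow_neg hl.le, ← div_eq_mul_inv, ENNReal.ofReal_div_of_pos hL, 
    ENNReal.le_div_iff_mul_le (Or.inl (by simpa using hL)) (Or.inl ENNReal.ofReal_ne_top), mul_comm]
  exact h1

lemma zyg_upper (n : ℕ) (q α r : ℝ) (hq : 0 < q) (hα : 0 ≤ α) (K : ℝ≥0∞)
    (f : EuclideanSpace ℝ (Fin n) → ℝ) (g : EuclideanSpace ℝ (Fin n) → ℝ≥0∞)
    (hfg : ∀ x, ENNReal.ofReal |f x| ≤ g x)
    (h : ∀ z, ∀ E ⊆ Metric.ball z r, MeasurableSet E → 0 < volume E →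
      ENNReal.ofReal (logFac (volume E).toReal) ^ α * ∫⁻ y in E, g y ^ q ≤ K) :
    zygNormUL n q α r f ≤ K ^ (1 / q) := by
  refine iSup_le fun z => iSup_le fun s => ?_
  apply ENNReal.rpow_le_rpow _ (by positivity)
  rw [ENNReal.mul_iSup]
  refine iSup_le fun ⟨E, hE, hEs⟩ => ?_
  have hb : MeasurableSet (Metric.ball z r) := Metric.isOpen_ball.measurableSet
  have h1 : ∫⁻ x in E, ENNReal.ofReal (|(Metric.ball z r).indicator f x| ^ q) ≤
      ∫⁻ x in E ∩ Metric.ball z r, g x ^ q := by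
    rw [inter_comm, ← Measure.restrict_restrict hb, ← lintegral_indicator hb]
    apply lintegral_mono
    intro x
    by_cases hx : x ∈ Metric.ball z r
    · simp only [Set.indicator_of_mem hx]
      rw [← ENNReal.ofReal_rpow_of_nonneg (abs_nonneg _) hq.le]
      exact ENNReal.rpow_le_rpow (hfg x) hq.le
    · simp [Set.indicator_of_notMem hx, Real.zero_rpow hq.ne']
  refine le_trans (mul_le_mul_right h1 _) ?_
  rcases eq_or_ne (volume (E ∩ Metric.ball z r)) 0 with h0 | h0
  · rw [setLIntegral_measure_zero _ _ h0, mul_zero]; exact bot_le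
  · have hp := pos_iff_ne_zero.2 h0
    refine le_trans ?_ (h z (E ∩ Metric.ball z r) inter_subset_right (hE.inter hb) hp)
    obtain ⟨_, hp'⟩ := vol_pos_of_sub inter_subset_right hp
    gcongr
    apply lf_anti hp'
    have := ENNReal.toReal_mono (by rw [hEs]; exact ENNReal.ofReal_ne_top)
      (measure_mono (μ := volume) (inter_subset_left : E ∩ Metric.ball z r ⊆ E))
    rwa [hEs, ENNReal.toReal_ofReal s.2.le] at this

lemma lim_bd (X N : ℝ≥0∞) (ε c : ℝ) (hε : 0 < ε) (hc : 0 < c) (hN : N ≤ ENNReal.ofReal (ε / 2))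
    (h : ∀ N', 0 < N' → N' ≤ ε → N ≤ ENNReal.ofReal N' → X ≤ ENNReal.ofReal (c * N')) :
    X ≤ ENNReal.ofReal c * N := by
  have hNt : N ≠ ⊤ := ne_top_of_le_ne_top ENNReal.ofReal_ne_top hN
  have hν : N.toReal ≤ ε / 2 := ENNReal.toReal_le_of_le_ofReal (by positivity) hN
  have hν0 := ENNReal.toReal_nonneg (a := N)
  apply ENNReal.le_of_forall_pos_le_add
  intro δ hδ _
  have hδ' : (0 : ℝ) < δ := hδ
  have hd : 0 < (δ : ℝ) / c := by positivity
  have hm : 0 < min (ε / 2) (δ / c) := lt_min (by positivity) hd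
  refine (h (N.toReal + min (ε / 2) (δ / c)) (by linarith) (by linarith [min_le_left (ε / 2) (δ / c)]) ?_).trans ?_
  · rw [ENNReal.le_ofReal_iff_toReal_le hNt (by linarith)]; linarith
  · have e : ENNReal.ofReal c * N + δ = ENNReal.ofReal (c * N.toReal + δ) := by
      rw [ENNReal.ofReal_add (by positivity) hδ'.le, ENNReal.ofReal_mul hc.le, ENNReal.ofReal_toReal hNt,
        ENNReal.ofReal_coe_nnreal]
    rw [e]
    apply ENNReal.ofReal_le_ofReal
    rw [mul_add]
    have := mul_le_mul_of_nonneg_left (min_le_right (ε / 2) (δ / c)) hc.le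
    rw [mul_div_cancel₀ _ hc.ne'] at this
    linarith

theorem stmt5 (n : ℕ) (hn : 1 ≤ n) (p : ℝ) (hp : p = 1 + 2 / n)
    (Tstar : ℝ) (hTstar : 0 < Tstar) (γ : ℝ) (hγ0 : 0 ≤ γ) (hγ : γ < (n : ℝ) / 2) :
    ∃ ε > (0 : ℝ), ∃ C > (0 : ℝ), ∀ φ : EuclideanSpace ℝ (Fin n) → ℝ,
      LocallyIntegrable φ volume →
      ∀ T : ℝ, 0 < T → T ≤ Tstar →
        zygNormUL n 1 ((n : ℝ) / 2) (T ^ ((1 : ℝ) / 2)) φ ≤ ENNReal.ofReal ε →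
        ∃ u : EuclideanSpace ℝ (Fin n) → ℝ → ℝ,
          IsSolution n p T φ u ∧
          ∀ t : ℝ, 0 < t → t < T →
            zygNormUL n 1 ((n : ℝ) / 2) (T ^ ((1 : ℝ) / 2)) (fun x => u x t) ≤
              ENNReal.ofReal C * zygNormUL n 1 ((n : ℝ) / 2) (T ^ ((1 : ℝ) / 2)) φ ∧
            zygNormUL n p γ (T ^ ((1 : ℝ) / 2)) (fun x => u x t) ≤
              ENNReal.ofReal (C * t ^ (-((n : ℝ) / 2) * (1 - 1 / p)) *
                  logFac t ^ (-(n : ℝ) / 2 + γ / p)) *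
                zygNormUL n 1 ((n : ℝ) / 2) (T ^ ((1 : ℝ) / 2)) φ ∧
            eLpNorm (fun x => u x t) ⊤ volume ≤
              ENNReal.ofReal (C * t ^ (-(n : ℝ) / 2) * logFac t ^ (-(n : ℝ) / 2)) *
                zygNormUL n 1 ((n : ℝ) / 2) (T ^ ((1 : ℝ) / 2)) φ := by
  have hn0 : (0 : ℝ) < n := by exact_mod_cast hn
  have hp0 : 0 < p := by rw [hp]; positivity
  obtain ⟨ε, hε, C0, hC0, H⟩ := exists_super n hn Tstar hTstar
  obtain ⟨C1, hC1, Hp⟩ := pg_est n hn Tstar hTstar γ hγ0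
  have hC1p : 0 < C1 ^ (1 / p) := Real.rpow_pos_of_pos hC1 _
  have hCC : C0 ≤ C0 * (1 + C1 ^ (1 / p)) := by nlinarith
  have hCC' : C1 ^ (1 / p) * C0 ≤ C0 * (1 + C1 ^ (1 / p)) := by nlinarith
  refine ⟨ε / 2, by positivity, C0 * (1 + C1 ^ (1 / p)), by positivity, ?_⟩
  intro φ hφ T hT hTT hN
  obtain ⟨ψ, hψm, hae⟩ := hφ.aestronglyMeasurable
  have hψ : Measurable ψ := hψm.measurable
  obtain ⟨U, hU, hUeq, HU⟩ := H T (fun y => ENNReal.ofReal |ψ y|) hT hTT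
    (continuous_abs.measurable.comp hψ).ennreal_ofReal
  have HS : ∀ N', 0 < N' → N' ≤ ε → zygNormUL n 1 ((n : ℝ) / 2) (T ^ ((1 : ℝ) / 2)) φ ≤ ENNReal.ofReal N' →
      ∀ t, 0 < t → t < T → SetB n T (C0 * N') (fun x => U x t) ∧ SupB n (C0 * N') t (fun x => U x t) :=
    fun N' h1 h2 h3 => HU N' h1 h2 (zyg_setB n T N' h1 φ ψ hae h3)
  have hUfin : ∀ x t, 0 < t → t < T → U x t ≠ ⊤ := fun x t ht htT =>
    ne_top_of_le_ne_top ENNReal.ofReal_ne_top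
      ((HS (ε / 2) (by positivity) (by linarith) hN t ht htT).2 x)
  rw [← hp] at hUeq Hp
  obtain ⟨u, hum, huU, hueq⟩ := exists_signed n p T hp0 ψ hψ U hU hUeq hUfin
  refine ⟨u, ⟨hum, ?_⟩, ?_⟩
  · have hq : ∀ᵐ q : EuclideanSpace ℝ (Fin n) × ℝ ∂(volume.prod (volume.restrict (Set.Ioo 0 T))),
        q.2 ∈ Ioo 0 T :=
      Measure.quasiMeasurePreserving_snd.ae (ae_restrict_mem measurableSet_Ioo)
    filter_upwards [hq] with q hq
    obtain ⟨a1, a2, a3⟩ := hueq q.1 q.2 hq.1 hq.2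
    have hc : (fun y => heatKernel n (q.1 - y) q.2 * ψ y) =ᵐ[volume]
        fun y => heatKernel n (q.1 - y) q.2 * φ y := by
      filter_upwards [hae] with y hy
      rw [hy]
    exact ⟨a1.congr hc, a2, by rw [← integral_congr_ae hc]; exact a3⟩
  · intro t ht htT
    have hl := lf_pos ht
    have hUt : Measurable fun x => U x t := hU.comp (by fun_prop : Measurable fun x : EuclideanSpace ℝ (Fin n) => (x, t))
    refine ⟨?_, ?_, ?_⟩
    · apply lim_bd _ _ ε _ hε (by positivity) hN
      intro N' h1 h2 h3
      obtain ⟨hS, -⟩ := HS N' h1 h2 h3 t ht htT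
      have := zyg_upper n 1 ((n : ℝ) / 2) (T ^ ((1 : ℝ) / 2)) one_pos (by positivity)
        (ENNReal.ofReal (C0 * N')) (fun x => u x t) (fun x => U x t) (fun x => huU x t ht htT) ?_
      · rw [div_one, ENNReal.rpow_one] at this
        exact this.trans (ENNReal.ofReal_le_ofReal (by gcongr))
      · intro z E hsub hE hpos
        rw [← Real.sqrt_eq_rpow] at hsub
        obtain ⟨_, hp'⟩ := vol_pos_of_sub hsub hpos
        have hlE := lf_pos hp'
        have := hS z E hE hsub hpos
        simp only [ENNReal.rpow_one]
        rw [ENNReal.ofReal_rpow_of_pos hlE]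
        refine (mul_le_mul_right this _).trans (le_of_eq ?_)
        rw [← ENNReal.ofReal_mul (by positivity)]
        congr 1
        rw [Real.rpow_neg hlE.le]
        have : 0 < logFac (volume E).toReal ^ ((n : ℝ) / 2) := Real.rpow_pos_of_pos hlE _
        field_simp
    · apply lim_bd _ _ ε _ hε (by positivity) hN
      intro N' h1 h2 h3
      obtain ⟨hS, hP⟩ := HS N' h1 h2 h3 t ht htT
      have hM : 0 < C0 * N' := by positivity
      have := zyg_upper n p γ (T ^ ((1 : ℝ) / 2)) hp0 hγ0
        _ (fun x => u x t) (fun x => U x t) (fun x => huU x t ht htT) (by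
          rw [← Real.sqrt_eq_rpow]
          exact Hp T (C0 * N') t _ hM hUt ht htT.le hTT hS hP)
      refine this.trans ?_
      rw [ENNReal.ofReal_rpow_of_pos (by positivity)]
      apply ENNReal.ofReal_le_ofReal
      rw [Real.mul_rpow (by positivity) (by positivity), Real.mul_rpow (by positivity) (by positivity),
        Real.mul_rpow (x := t ^ (-1 : ℝ)) (by positivity) (by positivity), ← Real.rpow_mul hM.le, ← Real.rpow_mul ht.le,
        ← Real.rpow_mul hl.le, mul_one_div_cancel hp0.ne', Real.rpow_one]
      have e1 : -1 * (1 / p) = -((n : ℝ) / 2) * (1 - 1 / p) := by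
        rw [hp]; field_simp; ring
      have e2 : (-((n : ℝ) / 2) - 1 + γ) * (1 / p) = -(n : ℝ) / 2 + γ / p := by
        rw [hp]; field_simp; ring
      rw [e1, e2]
      have hx : 0 < t ^ (-((n : ℝ) / 2) * (1 - 1 / p)) := Real.rpow_pos_of_pos ht _
      have hy : 0 < logFac t ^ (-(n : ℝ) / 2 + γ / p) := Real.rpow_pos_of_pos hl _
      generalize t ^ (-((n : ℝ) / 2) * (1 - 1 / p)) = X at *
      generalize logFac t ^ (-(n : ℝ) / 2 + γ / p) = Y at *
      calc C1 ^ (1 / p) * (C0 * N' * (X * Y)) = (C1 ^ (1 / p) * C0) * (X * Y * N') := by ring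
        _ ≤ (C0 * (1 + C1 ^ (1 / p))) * (X * Y * N') := by gcongr
        _ = _ := by ring
    · apply lim_bd _ _ ε _ hε (by positivity) hN
      intro N' h1 h2 h3
      obtain ⟨-, hP⟩ := HS N' h1 h2 h3 t ht htT
      rw [eLpNorm_exponent_top]
      apply eLpNormEssSup_le_of_ae_enorm_bound
      refine Filter.Eventually.of_forall fun x => ?_
      rw [Real.enorm_eq_ofReal_abs]
      refine ((huU x t ht htT).trans (hP x)).trans (ENNReal.ofReal_le_ofReal ?_)
      rw [neg_div]
      have hx : 0 < t ^ (-((n : ℝ) / 2)) := Real.rpow_pos_of_pos ht _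
      have hy : 0 < logFac t ^ (-((n : ℝ) / 2)) := Real.rpow_pos_of_pos hl _
      generalize t ^ (-((n : ℝ) / 2)) = X at *
      generalize logFac t ^ (-((n : ℝ) / 2)) = Y at *
      calc C0 * N' * (X * Y) = C0 * (X * Y * N') := by ring
        _ ≤ (C0 * (1 + C1 ^ (1 / p))) * (X * Y * N') := by gcongr
        _ = _ := by ring
end

section
/- Let n ≥ 1, q ∈ [1,∞), and α ≥ 0. The weak Zygmund type space 𝔏^{q,∞}(log 𝔏)^α on ℝ^n is complete: if (f_k) is a sequence of locally integrable functions with ‖f_k‖_{𝔏^{q,∞}(log 𝔏)^α} < ∞ for all k which is Cauchy with respect to the norm ‖·‖_{𝔏^{q,∞}(log 𝔏)^α}, then there exists a locally integrable f with ‖f‖_{𝔏^{q,∞}(log 𝔏)^α} < ∞ such that ‖f_k − f‖_{𝔏^{q,∞}(log 𝔏)^α} → 0 as k → ∞. -/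
open MeasureTheory Real Set ENNReal

lemma zyg_le_iff (n : ℕ) (q α : ℝ) (hq : 1 ≤ q) (f : EuclideanSpace ℝ (Fin n) → ℝ) (C : ℝ≥0∞) :
    zygNorm n q α f ≤ C ↔ ∀ s : ℝ, 0 < s → ∀ E : Set (EuclideanSpace ℝ (Fin n)),
      MeasurableSet E → volume E = ENNReal.ofReal s →
      (ENNReal.ofReal (logFac s) ^ α) ^ (1 / q) *
        eLpNorm f (ENNReal.ofReal q) (volume.restrict E) ≤ C := by
  have hq0 : 0 < q := by linarith
  have key : ∀ E : Set (EuclideanSpace ℝ (Fin n)),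
      eLpNorm f (ENNReal.ofReal q) (volume.restrict E)
        = (∫⁻ x in E, ENNReal.ofReal (|f x| ^ q)) ^ (1 / q) := by
    intro E
    rw [eLpNorm_eq_lintegral_rpow_enorm_toReal (by simpa using hq0) (by simp),
      ENNReal.toReal_ofReal hq0.le]
    congr 1
    apply lintegral_congr
    intro x
    rw [← ENNReal.ofReal_rpow_of_nonneg (abs_nonneg _) hq0.le, ← Real.enorm_abs,
      Real.enorm_eq_ofReal (abs_nonneg _)]
  unfold zygNorm
  simp only [iSup_le_iff, Subtype.forall, Set.mem_Ioi]
  refine forall₂_congr fun s hs => ?_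
  rw [one_div, ENNReal.rpow_inv_le_iff hq0, ENNReal.mul_iSup, iSup_le_iff]
  simp only [Subtype.forall, and_imp]
  refine forall₃_congr fun E hE hv => ?_
  rw [key, one_div, ← ENNReal.mul_rpow_of_nonneg _ _ (by positivity), ENNReal.rpow_inv_le_iff hq0]

lemma fac_ge (q α : ℝ) (hq : 1 ≤ q) (hα : 0 ≤ α) (s : ℝ) (hs : 0 < s) :
    1 ≤ (ENNReal.ofReal (logFac s) ^ α) ^ (1 / q) := by
  have h1 : 1 ≤ logFac s := by
    unfold logFac
    rw [Real.le_log_iff_exp_le (by positivity)]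
    have : 0 < 1 / s := by positivity
    linarith
  apply ENNReal.one_le_rpow _ (by positivity)
  rcases hα.eq_or_lt with h | h
  · simp [← h]
  · exact ENNReal.one_le_rpow (by simpa using h1) h

lemma eLp_le_zyg (n : ℕ) (q α : ℝ) (hq : 1 ≤ q) (hα : 0 ≤ α) (f : EuclideanSpace ℝ (Fin n) → ℝ)
    (s : ℝ) (hs : 0 < s) (E : Set (EuclideanSpace ℝ (Fin n)))
    (hE : MeasurableSet E) (hv : volume E = ENNReal.ofReal s) :
    eLpNorm f (ENNReal.ofReal q) (volume.restrict E) ≤ zygNorm n q α f :=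
  le_trans (le_mul_of_one_le_left zero_le (fac_ge q α hq hα s hs))
    ((zyg_le_iff n q α hq f _).1 le_rfl s hs E hE hv)

lemma eLp_ball_le (n : ℕ) (q α : ℝ) (hq : 1 ≤ q) (hα : 0 ≤ α) (f : EuclideanSpace ℝ (Fin n) → ℝ)
    (x : EuclideanSpace ℝ (Fin n)) (r : ℝ) (hr : 0 < r) :
    eLpNorm f (ENNReal.ofReal q) (volume.restrict (Metric.ball x r)) ≤ zygNorm n q α f := by
  have h0 := Metric.measure_ball_pos volume x hr
  have h1 : volume (Metric.ball x r) ≠ ⊤ := measure_ball_lt_top.ne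
  exact eLp_le_zyg n q α hq hα f (volume (Metric.ball x r)).toReal (ENNReal.toReal_pos h0.ne' h1) _
    measurableSet_ball (ENNReal.ofReal_toReal h1).symm

theorem stmt6 (n : ℕ) (hn : 1 ≤ n) (q α : ℝ) (hq : 1 ≤ q) (hα : 0 ≤ α)
    (f : ℕ → EuclideanSpace ℝ (Fin n) → ℝ)
    (hloc : ∀ k, LocallyIntegrable (f k) volume)
    (hfin : ∀ k, zygNorm n q α (f k) < ⊤)
    (hcauchy : ∀ δ > (0 : ℝ), ∃ N : ℕ, ∀ m ≥ N, ∀ k ≥ N,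
      zygNorm n q α (fun x => f m x - f k x) < ENNReal.ofReal δ) :
    ∃ g : EuclideanSpace ℝ (Fin n) → ℝ, LocallyIntegrable g volume ∧
      zygNorm n q α g < ⊤ ∧
      Filter.Tendsto (fun k => zygNorm n q α (fun x => f k x - g x))
        Filter.atTop (nhds 0) := by
  have hq1 : 1 ≤ ENNReal.ofReal q := by simpa using hq
  have hm : ∀ k, AEStronglyMeasurable (f k) volume := fun k => (hloc k).aestronglyMeasurable
  have hB : ∀ j : ℕ, (0:ℝ) < (1/2)^j := fun j => by positivity
  choose N hN using fun j : ℕ => hcauchy _ (hB j)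
  let φ : ℕ → ℕ := fun j => j + ∑ i ∈ Finset.range (j+1), N i
  have hφ : ∀ i j, i ≤ j → N i ≤ φ j := by
    intro i j hij
    have : N i ≤ ∑ i ∈ Finset.range (j+1), N i :=
      Finset.single_le_sum (f := N) (fun _ _ => Nat.zero_le _) (by simp; omega)
    exact this.trans (Nat.le_add_left _ _)
  have hφ' : ∀ j, j ≤ φ j := fun j => Nat.le_add_right _ _
  have hae : ∀ᵐ x ∂(volume : Measure (EuclideanSpace ℝ (Fin n))),
      ∃ l : ℝ, Filter.Tendsto (fun j => f (φ j) x) Filter.atTop (nhds l) := by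
    have : ∀ r : ℕ, ∀ᵐ x ∂(volume.restrict (Metric.ball (0 : EuclideanSpace ℝ (Fin n)) (r+1))),
      ∃ l : ℝ, Filter.Tendsto (fun j => f (φ j) x) Filter.atTop (nhds l) := by
      intro r
      refine Lp.ae_tendsto_of_cauchy_eLpNorm (p := ENNReal.ofReal q)
        (B := fun j => ENNReal.ofReal ((1/2)^j)) (fun j => (hm _).restrict) hq1 ?_ ?_
      · rw [← ENNReal.ofReal_tsum_of_nonneg (fun j => (hB j).le) summable_geometric_two]
        simp
      · intro M a b ha hb
        exact (eLp_ball_le n q α hq hα _ _ _ (by positivity)).trans_lt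
          (hN M _ (hφ M a ha) _ (hφ M b hb))
    have h2 := (ae_restrict_iUnion_iff (μ := volume)
      (fun r : ℕ => Metric.ball (0 : EuclideanSpace ℝ (Fin n)) (r+1)) _).2 this
    have h3 : (⋃ r : ℕ, Metric.ball (0 : EuclideanSpace ℝ (Fin n)) (r+1)) = univ := by
      refine eq_univ_of_forall fun x => mem_iUnion.2 ?_
      obtain ⟨k, hk⟩ := exists_nat_gt ‖x‖
      exact ⟨k, by simp; linarith⟩
    rwa [h3, Measure.restrict_univ] at h2
  obtain ⟨g, hg, hgl⟩ := exists_stronglyMeasurable_limit_of_tendsto_ae (fun j => hm (φ j)) hae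
  have hgm : AEStronglyMeasurable g volume := hg.aestronglyMeasurable
  have hlim : ∀ δ > (0:ℝ), ∃ M : ℕ, ∀ k ≥ M,
      zygNorm n q α (fun x => f k x - g x) ≤ ENNReal.ofReal δ := by
    intro δ hδ
    obtain ⟨M, hM⟩ := hcauchy δ hδ
    refine ⟨M, fun k hk => (zyg_le_iff n q α hq _ _).2 fun s hs E hE hv => ?_⟩
    set c := (ENNReal.ofReal (logFac s) ^ α) ^ (1 / q) with hc
    have hc1 : 1 ≤ c := fac_ge q α hq hα s hs
    have hct : c ≠ ⊤ := ENNReal.rpow_ne_top_of_nonneg (by positivity)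
      (ENNReal.rpow_ne_top_of_nonneg hα ENNReal.ofReal_ne_top)
    have hc0 : c ≠ 0 := (zero_lt_one.trans_le hc1).ne'
    rw [mul_comm, ← ENNReal.le_div_iff_mul_le (Or.inl hc0) (Or.inl hct)]
    refine (Lp.eLpNorm_lim_le_liminf_eLpNorm (f := fun j x => f k x - f (φ j) x)
      (fun j => ((hm k).sub (hm _)).restrict) _ ?_).trans ?_
    · filter_upwards [ae_restrict_of_ae hgl] with x hx
      exact hx.const_sub _
    · refine Filter.liminf_le_of_frequently_le' (Filter.Eventually.frequently ?_)
      filter_upwards [Filter.eventually_ge_atTop M] with j hj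
      rw [ENNReal.le_div_iff_mul_le (Or.inl hc0) (Or.inl hct), mul_comm]
      exact (zyg_le_iff n q α hq _ _).1 (hM k hk (φ j) (hj.trans (hφ' j))).le s hs E hE hv
  have hgfin : zygNorm n q α g < ⊤ := by
    obtain ⟨M, hM⟩ := hlim 1 one_pos
    refine lt_of_le_of_lt (b := zygNorm n q α (f M) + ENNReal.ofReal 1) ?_
      (ENNReal.add_lt_top.2 ⟨hfin M, ENNReal.ofReal_lt_top⟩)
    refine (zyg_le_iff n q α hq _ _).2 fun s hs E hE hv => ?_
    have e : g = f M - (fun x => f M x - g x) := by ext x; simp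
    have h := eLpNorm_sub_le (μ := volume.restrict E) (p := ENNReal.ofReal q)
      (hm M).restrict ((hm M).sub hgm).restrict hq1
    have e' : f M - (f M - g) = g := by simp
    rw [e'] at h
    refine (mul_le_mul_right h _).trans ?_
    rw [mul_add]
    exact add_le_add ((zyg_le_iff n q α hq _ _).1 le_rfl s hs E hE hv)
      ((zyg_le_iff n q α hq _ _).1 (hM M le_rfl) s hs E hE hv)
  refine ⟨g, ?_, hgfin, ?_⟩
  · intro x
    refine ⟨Metric.ball x 1, Metric.ball_mem_nhds x one_pos, ?_⟩
    haveI : IsFiniteMeasure (volume.restrict (Metric.ball x 1)) :=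
      ⟨by simpa using measure_ball_lt_top⟩
    have : MemLp g (ENNReal.ofReal q) (volume.restrict (Metric.ball x 1)) :=
      ⟨hgm.restrict, (eLp_ball_le n q α hq hα g x 1 one_pos).trans_lt hgfin⟩
    exact this.integrable hq1
  · rw [ENNReal.tendsto_atTop_zero]
    intro ε hε
    by_cases ht : ε = ⊤
    · exact ⟨0, fun k _ => by simp [ht]⟩
    · obtain ⟨M, hM⟩ := hlim ε.toReal (ENNReal.toReal_pos hε.ne' ht)
      exact ⟨M, fun k hk => (hM k hk).trans (ENNReal.ofReal_toReal ht).le⟩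
end

section
/- Let n ≥ 1, let q₁, q₂ ∈ [1,∞] with 1 = 1/q₁ + 1/q₂, let α₁, α₂ ≥ 0, and set α = α₁/q₁ + α₂/q₂. Then for all locally integrable f₁, f₂ on ℝ^n with ‖f₁‖_{𝔏^{q₁,∞}(log 𝔏)^{α₁}} < ∞ and ‖f₂‖_{𝔏^{q₂,∞}(log 𝔏)^{α₂}} < ∞, one has ‖f₁ f₂‖_{𝔏^{1,∞}(log 𝔏)^α} ≤ ‖f₁‖_{𝔏^{q₁,∞}(log 𝔏)^{α₁}} · ‖f₂‖_{𝔏^{q₂,∞}(log 𝔏)^{α₂}}. -/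
open MeasureTheory Real Set ENNReal

/-- The weak Zygmund type norm `‖f‖_{𝔏^{q,∞}(log 𝔏)^α}` for an exponent
`q ∈ [1,∞]`; for `q = ∞` it is the `L^∞` norm. -/
noncomputable def zygNormE (n : ℕ) (q : ℝ≥0∞) (α : ℝ)
    (f : EuclideanSpace ℝ (Fin n) → ℝ) : ℝ≥0∞ :=
  if q = ⊤ then eLpNorm f ⊤ volume
  else
    ⨆ s : Set.Ioi (0 : ℝ),
      (ENNReal.ofReal (logFac s.1) ^ α *
        ⨆ E : {E : Set (EuclideanSpace ℝ (Fin n)) //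
            MeasurableSet E ∧ volume E = ENNReal.ofReal s.1},
          ∫⁻ x in E.1, ENNReal.ofReal (|f x| ^ q.toReal)) ^ (1 / q.toReal)

theorem zyg_le_of (n : ℕ) (α : ℝ) (g : EuclideanSpace ℝ (Fin n) → ℝ) (C : ℝ≥0∞)
    (h : ∀ s : ℝ, 0 < s → ∀ E : Set (EuclideanSpace ℝ (Fin n)), MeasurableSet E →
      volume E = ENNReal.ofReal s →
      ENNReal.ofReal (logFac s) ^ α * ∫⁻ x in E, ENNReal.ofReal |g x| ≤ C) :
    zygNormE n 1 α g ≤ C := by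
  unfold zygNormE
  rw [if_neg ENNReal.one_ne_top]
  refine iSup_le fun s => ?_
  simp only [ENNReal.toReal_one, div_one, ENNReal.rpow_one, Real.rpow_one]
  rw [ENNReal.mul_iSup]
  exact iSup_le fun E => h s.1 s.2 E.1 E.2.1 E.2.2

theorem le_zyg (n : ℕ) (q : ℝ≥0∞) (hq : q ≠ ⊤) (α : ℝ)
    (f : EuclideanSpace ℝ (Fin n) → ℝ) (s : ℝ) (hs : 0 < s)
    (E : Set (EuclideanSpace ℝ (Fin n))) (hE : MeasurableSet E)
    (hv : volume E = ENNReal.ofReal s) :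
    ENNReal.ofReal (logFac s) ^ (α * (1 / q.toReal)) *
      (∫⁻ x in E, ENNReal.ofReal (|f x| ^ q.toReal)) ^ (1 / q.toReal) ≤ zygNormE n q α f := by
  have h0 : 0 ≤ 1 / q.toReal := by positivity
  unfold zygNormE
  rw [if_neg hq, ENNReal.rpow_mul, ← ENNReal.mul_rpow_of_nonneg _ _ h0]
  refine le_trans ?_ (le_iSup _ (⟨s, hs⟩ : Set.Ioi (0 : ℝ)))
  refine ENNReal.rpow_le_rpow ?_ h0
  gcongr
  exact le_iSup (fun E : {E : Set (EuclideanSpace ℝ (Fin n)) //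
            MeasurableSet E ∧ volume E = ENNReal.ofReal s} =>
          ∫⁻ x in E.1, ENNReal.ofReal (|f x| ^ q.toReal)) ⟨E, hE, hv⟩

theorem zyg_top (n : ℕ) (α₁ α₂ : ℝ) (f₁ f₂ : EuclideanSpace ℝ (Fin n) → ℝ)
    (hf₁ : zygNormE n ⊤ α₁ f₁ < ⊤) :
    zygNormE n 1 α₂ (fun x => f₁ x * f₂ x) ≤ zygNormE n ⊤ α₁ f₁ * zygNormE n 1 α₂ f₂ := by
  have e : zygNormE n ⊤ α₁ f₁ = eLpNorm f₁ ⊤ volume := by simp [zygNormE]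
  rw [e] at hf₁ ⊢
  refine zyg_le_of _ _ _ _ fun s hs E hE hv => ?_
  have h2 := le_zyg n 1 ENNReal.one_ne_top α₂ f₂ s hs E hE hv
  simp only [ENNReal.toReal_one, div_one, ENNReal.rpow_one, Real.rpow_one, mul_one] at h2
  refine le_trans ?_ (mul_le_mul_right h2 _)
  rw [mul_left_comm, ← lintegral_const_mul' _ _ hf₁.ne]
  refine mul_le_mul' le_rfl ?_
  apply lintegral_mono_ae
  have := ae_restrict_of_ae (s := E) (enorm_ae_le_eLpNormEssSup f₁ volume)
  rw [eLpNorm_exponent_top]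
  filter_upwards [this] with x hx
  rw [abs_mul, ENNReal.ofReal_mul (abs_nonneg _)]
  gcongr
  rwa [← Real.enorm_eq_ofReal_abs]

theorem stmt7 (n : ℕ) (hn : 1 ≤ n) (q₁ q₂ : ℝ≥0∞) (hq₁ : 1 ≤ q₁) (hq₂ : 1 ≤ q₂)
    (hq : q₁⁻¹ + q₂⁻¹ = 1) (α₁ α₂ : ℝ) (hα₁ : 0 ≤ α₁) (hα₂ : 0 ≤ α₂)
    (α : ℝ) (hα : α = α₁ * q₁⁻¹.toReal + α₂ * q₂⁻¹.toReal)
    (f₁ f₂ : EuclideanSpace ℝ (Fin n) → ℝ)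
    (h₁ : LocallyIntegrable f₁ volume) (h₂ : LocallyIntegrable f₂ volume)
    (hf₁ : zygNormE n q₁ α₁ f₁ < ⊤) (hf₂ : zygNormE n q₂ α₂ f₂ < ⊤) :
    zygNormE n 1 α (fun x => f₁ x * f₂ x) ≤
      zygNormE n q₁ α₁ f₁ * zygNormE n q₂ α₂ f₂ := by
  by_cases t₁ : q₁ = ⊤
  · subst t₁
    have : q₂ = 1 := by simpa using hq
    subst this
    have : α = α₂ := by simpa using hα
    subst this
    exact zyg_top n _ _ f₁ f₂ hf₁
  by_cases t₂ : q₂ = ⊤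
  · subst t₂
    have : q₁ = 1 := by simpa using hq
    subst this
    have : α = α₁ := by simpa using hα
    subst this
    have := zyg_top n _ α f₂ f₁ hf₂
    rw [mul_comm]
    simpa only [mul_comm] using this
  have p₁ : 0 < q₁.toReal := ENNReal.toReal_pos (by rintro rfl; simp at hq₁) t₁
  have p₂ : 0 < q₂.toReal := ENNReal.toReal_pos (by rintro rfl; simp at hq₂) t₂
  have hc : q₁.toReal⁻¹ + q₂.toReal⁻¹ = 1 := by
    rw [← ENNReal.toReal_inv, ← ENNReal.toReal_inv, ← ENNReal.toReal_add, hq, ENNReal.toReal_one]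
    · simp; rintro rfl; simp at hq₁
    · simp; rintro rfl; simp at hq₂
  have hH : q₁.toReal.HolderConjugate q₂.toReal :=
    ⟨by simpa using hc, p₁, p₂⟩
  refine zyg_le_of _ _ _ _ fun s hs E hE hv => ?_
  refine le_trans ?_ (mul_le_mul' (le_zyg n q₁ t₁ α₁ f₁ s hs E hE hv)
    (le_zyg n q₂ t₂ α₂ f₂ s hs E hE hv))
  rw [mul_mul_mul_comm, ← ENNReal.rpow_add_of_nonneg _ _ (by positivity) (by positivity)]
  rw [hα, ENNReal.toReal_inv, ENNReal.toReal_inv, one_div, one_div]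
  refine mul_le_mul' le_rfl ?_
  have m₁ : AEMeasurable (fun x => ENNReal.ofReal |f₁ x|) (volume.restrict E) :=
    (h₁.aestronglyMeasurable.aemeasurable.abs.ennreal_ofReal).restrict
  have m₂ : AEMeasurable (fun x => ENNReal.ofReal |f₂ x|) (volume.restrict E) :=
    (h₂.aestronglyMeasurable.aemeasurable.abs.ennreal_ofReal).restrict
  have := ENNReal.lintegral_mul_le_Lp_mul_Lq (volume.restrict E) hH m₁ m₂
  simpa only [Pi.mul_apply, abs_mul, ENNReal.ofReal_mul (abs_nonneg _), one_div,
    ENNReal.ofReal_rpow_of_nonneg (abs_nonneg _) p₁.le,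
    ENNReal.ofReal_rpow_of_nonneg (abs_nonneg _) p₂.le] using this
end

section
/- Let n ≥ 1, θ ∈ (0,2], 1 ≤ r ≤ q < ∞, and γ ∈ ℝ, and assume γ ≥ 0 if r = q. Then there exists C > 0 such that for all t > 0, ∫_0^∞ τ^{q(1 − 1/r)} [log(e + 1/τ)]^γ (t^{−n/θ} (1 + t^{−1/θ} τ^{1/n})^{−n−θ})^q dτ ≤ C t^{−(nq/θ)(1/r − 1/q)} [log(e + 1/t)]^γ. -/
open MeasureTheory Real Set

noncomputable def LgF (x : ℝ) : ℝ := Real.log (Real.exp 1 + 1 / x)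

lemma LgF_one_le {x : ℝ} (hx : 0 < x) : 1 ≤ LgF x := by
  unfold LgF
  rw [Real.le_log_iff_exp_le (by positivity)]
  have : 0 < 1 / x := by positivity
  linarith

lemma LgF_mul {x y : ℝ} (hx : 0 < x) (hy : 0 < y) : LgF (x * y) ≤ 2 * (LgF x * LgF y) := by
  have h1 := LgF_one_le hx
  have h2 := LgF_one_le hy
  have h : LgF (x * y) ≤ LgF x + LgF y := by
    unfold LgF
    rw [← Real.log_mul (by positivity) (by positivity)]
    apply Real.log_le_log (by positivity)
    have e1 : 1 ≤ Real.exp 1 := Real.one_le_exp (by norm_num)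
    have hx' : 0 < 1 / x := by positivity
    have hy' : 0 < 1 / y := by positivity
    have : 1 / (x * y) = (1 / x) * (1 / y) := by field_simp
    rw [this]
    nlinarith [mul_pos hx' (Real.exp_pos 1), mul_pos hy' (Real.exp_pos 1)]
  nlinarith

lemma LgF_rpow {t p : ℝ} (ht : 0 < t) (hp : 0 < p) : LgF (t ^ p) ≤ (p + 2) * LgF t := by
  have h1 := LgF_one_le ht
  have hpos : 0 < Real.exp 1 + 1 / t := by positivity
  have h3 : 1 / t ^ p ≤ Real.exp (p * LgF t) := by
    have : Real.exp (p * LgF t) = (Real.exp 1 + 1 / t) ^ p := by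
      rw [Real.rpow_def_of_pos hpos, mul_comm]; rfl
    rw [this, one_div, ← Real.inv_rpow ht.le, ← one_div]
    apply Real.rpow_le_rpow (by positivity) _ hp.le
    linarith [Real.exp_pos 1]
  have h4 : LgF (t ^ p) ≤ p * LgF t + 2 := by
    have hq : 0 < t ^ p := by positivity
    unfold LgF at *
    rw [Real.log_le_iff_le_exp (by positivity), Real.exp_add]
    have e1 : 2 ≤ Real.exp 1 := by linarith [Real.add_one_le_exp 1]
    have e2 : Real.exp 2 = Real.exp 1 * Real.exp 1 := by rw [← Real.exp_add]; norm_num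
    have e3 : 1 ≤ Real.exp (p * Real.log (Real.exp 1 + 1 / t)) := Real.one_le_exp (by nlinarith)
    rw [e2]
    nlinarith [mul_le_mul e3 e1 (by norm_num) (by linarith)]
  nlinarith

lemma cmp_rpow {x y K γ : ℝ} (hx : 1 ≤ x) (hy : 1 ≤ y) (hK : 1 ≤ K) (h1 : x ≤ K * y)
    (h2 : y ≤ K * x) : x ^ γ ≤ K ^ |γ| * y ^ γ := by
  rcases le_total 0 γ with h | h
  · rw [abs_of_nonneg h, ← Real.mul_rpow (by linarith) (by linarith)]
    exact Real.rpow_le_rpow (by linarith) h1 h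
  · rw [abs_of_nonpos h, Real.rpow_neg (by linarith), ← Real.inv_rpow (by linarith),
      ← Real.mul_rpow (by positivity) (by linarith)]
    apply Real.rpow_le_rpow_of_nonpos (by positivity) _ h
    rw [inv_mul_le_iff₀ (by linarith)]
    exact h2

lemma log_rpow_bd {g δ : ℝ} (hg : 0 ≤ g) (hδ : 0 < δ) :
    ∃ C > (0 : ℝ), ∀ y ≥ (1 : ℝ), Real.log y ^ g ≤ C * y ^ δ := by
  have hε : 0 < δ / (g + 1) := by positivity
  refine ⟨((δ / (g + 1)) ^ g)⁻¹, by positivity, fun y hy => ?_⟩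
  have h := Real.log_le_rpow_div (x := y) (by linarith) hε
  have hl := Real.log_nonneg hy
  calc Real.log y ^ g ≤ (y ^ (δ / (g + 1)) / (δ / (g + 1))) ^ g := Real.rpow_le_rpow hl h hg
    _ = ((δ / (g + 1)) ^ g)⁻¹ * y ^ (δ / (g + 1) * g) := by
      rw [Real.div_rpow (by positivity) (by positivity), ← Real.rpow_mul (by linarith)]
      field_simp
    _ ≤ _ := by
      gcongr
      · rw [div_mul_eq_mul_div, div_le_iff₀ (by positivity)]
        nlinarith

lemma int_G {δ b : ℝ} (hδ : δ < 1) (hb : 1 < b) :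
    IntegrableOn (fun s : ℝ => if s ≤ 1 then s ^ (-δ) else s ^ (-b)) (Ioi 0) := by
  rw [← Ioc_union_Ioi_eq_Ioi (zero_le_one (α := ℝ))]
  apply IntegrableOn.union
  · have h : IntegrableOn (fun s : ℝ => s ^ (-δ)) (Ioc 0 1) := by
      rw [← intervalIntegrable_iff_integrableOn_Ioc_of_le zero_le_one]
      exact intervalIntegral.intervalIntegrable_rpow' (by linarith)
    refine h.congr_fun (fun s hs => ?_) measurableSet_Ioc
    simp [hs.2]
  · have h : IntegrableOn (fun s : ℝ => s ^ (-b)) (Ioi 1) :=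
      integrableOn_Ioi_rpow_of_lt (by linarith) one_pos
    refine h.congr_fun (fun s hs => ?_) measurableSet_Ioi
    simp [not_le.2 (mem_Ioi.1 hs)]

lemma LL_bd {g δ : ℝ} (hg : 0 ≤ g) (hδ : 0 < δ) :
    ∃ C > (0 : ℝ), ∀ s > (0 : ℝ), (LgF s * LgF (s⁻¹)) ^ g ≤
      C * (if s ≤ 1 then s ^ (-δ) else s ^ δ) := by
  obtain ⟨C, hC, h⟩ := log_rpow_bd hg hδ
  refine ⟨C * C * 16 ^ δ, by positivity, fun s hs => ?_⟩
  have e1 : 1 ≤ Real.exp 1 := Real.one_le_exp (by norm_num)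
  have e3 : Real.exp 1 ≤ 3 := by linarith [Real.exp_one_lt_d9]
  have hs' : 0 < s⁻¹ := by positivity
  have a1 := h (Real.exp 1 + 1 / s) (by rw [one_div]; linarith)
  have a2 := h (Real.exp 1 + 1 / s⁻¹) (by rw [one_div, inv_inv]; linarith)
  have b1 := LgF_one_le hs
  have b2 := LgF_one_le hs'
  rw [Real.mul_rpow (by linarith) (by linarith)]
  have key : LgF s ^ g * LgF s⁻¹ ^ g ≤ C * C * ((Real.exp 1 + 1 / s) * (Real.exp 1 + 1 / s⁻¹)) ^ δ := by
    rw [Real.mul_rpow (by positivity) (by positivity)]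
    calc _ ≤ (C * (Real.exp 1 + 1 / s) ^ δ) * (C * (Real.exp 1 + 1 / s⁻¹) ^ δ) :=
          mul_le_mul a1 a2 (by positivity) (by positivity)
      _ = _ := by ring
  refine key.trans ?_
  rw [mul_assoc (C * C)]
  gcongr
  rw [one_div, one_div, inv_inv]
  split_ifs with h1
  · have : 1 ≤ s⁻¹ := (one_le_inv₀ hs).2 h1
    rw [Real.rpow_neg hs.le, ← Real.inv_rpow hs.le, ← Real.mul_rpow (by norm_num) hs'.le]
    apply Real.rpow_le_rpow (by positivity) _ hδ.le
    calc _ ≤ (4 * s⁻¹) * 4 := mul_le_mul (by linarith) (by linarith) (by positivity) (by positivity)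
      _ = _ := by ring
  · push Not at h1
    have : s⁻¹ ≤ 1 := inv_le_one_of_one_le₀ h1.le
    rw [← Real.mul_rpow (by norm_num) hs.le]
    apply Real.rpow_le_rpow (by positivity) _ hδ.le
    calc _ ≤ 4 * (4 * s) := mul_le_mul (by linarith) (by linarith) (by positivity) (by positivity)
      _ = _ := by ring

lemma core_bd (n : ℕ) (hn : 1 ≤ n) {θ q r g : ℝ} (hθ0 : 0 < θ) (hr : 1 ≤ r) (hrq : r ≤ q)
    (hg : 0 ≤ g) :
    ∃ G : ℝ → ℝ, IntegrableOn G (Ioi 0) ∧ ∀ s > (0 : ℝ),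
      s ^ (q * (1 - 1 / r)) * (LgF s * LgF (s⁻¹)) ^ g *
        (1 + s ^ (1 / (n : ℝ))) ^ ((-(n : ℝ) - θ) * q) ≤ G s := by
  have hn' : (0 : ℝ) < n := by exact_mod_cast hn
  have hq : 0 < q := by linarith
  have hr0 : 0 < r := by linarith
  obtain ⟨δ, hδ0, hδ1, hδ2⟩ : ∃ δ : ℝ, 0 < δ ∧ δ < 1 ∧ δ < θ * q / n := by
    have : 0 < min 1 (θ * q / n) := by positivity
    obtain ⟨d, h1, h2⟩ := exists_between this
    exact ⟨d, h1, lt_min_iff.1 h2⟩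
  obtain ⟨C, hC, h⟩ := LL_bd hg hδ0
  have hqr : 1 ≤ q / r := (one_le_div hr0).2 hrq
  have ha : 0 ≤ q * (1 - 1 / r) := by
    have : 1 / r ≤ 1 := (div_le_one hr0).2 hr
    exact mul_nonneg hq.le (by linarith)
  refine ⟨fun s => C * (if s ≤ 1 then s ^ (-δ) else s ^ (-(q / r + θ * q / n - δ))),
    (int_G hδ1 (by linarith)).const_mul C, fun s hs => ?_⟩
  have h0 := h s hs
  have hneg : (-(n : ℝ) - θ) * q ≤ 0 := by nlinarith
  have b1 := LgF_one_le hs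
  have b2 := LgF_one_le (inv_pos.2 hs)
  have hsn : 0 < s ^ (1 / (n : ℝ)) := by positivity
  dsimp only
  split_ifs at h0 ⊢ with h1
  · have c1 : s ^ (q * (1 - 1 / r)) ≤ 1 := Real.rpow_le_one hs.le h1 ha
    have c2 : (1 + s ^ (1 / (n : ℝ))) ^ ((-(n : ℝ) - θ) * q) ≤ 1 :=
      Real.rpow_le_one_of_one_le_of_nonpos (by linarith) hneg
    calc _ ≤ 1 * (C * s ^ (-δ)) * 1 := by gcongr
      _ = _ := by ring
  · have c2 : (1 + s ^ (1 / (n : ℝ))) ^ ((-(n : ℝ) - θ) * q) ≤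
        (s ^ (1 / (n : ℝ))) ^ ((-(n : ℝ) - θ) * q) :=
      Real.rpow_le_rpow_of_nonpos hsn (by linarith) hneg
    calc _ ≤ s ^ (q * (1 - 1 / r)) * (C * s ^ δ) * (s ^ (1 / (n : ℝ))) ^ ((-(n : ℝ) - θ) * q) := by
          gcongr
      _ = C * (s ^ (q * (1 - 1 / r)) * s ^ δ * s ^ (1 / (n : ℝ) * ((-(n : ℝ) - θ) * q))) := by
          rw [← Real.rpow_mul hs.le]; ring
      _ = _ := by
          rw [← Real.rpow_add hs, ← Real.rpow_add hs]
          congr 2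
          field_simp
          ring

theorem stmt15 (n : ℕ) (hn : 1 ≤ n) (θ : ℝ) (hθ0 : 0 < θ) (hθ2 : θ ≤ 2)
    (r q : ℝ) (hr : 1 ≤ r) (hrq : r ≤ q) (γ : ℝ) (hγ : r = q → 0 ≤ γ) :
    ∃ C > (0 : ℝ), ∀ t > (0 : ℝ),
      (∫ τ in Set.Ioi (0 : ℝ),
          τ ^ (q * (1 - 1 / r)) * Real.log (Real.exp 1 + 1 / τ) ^ γ *
            (t ^ (-(n : ℝ) / θ) *
              (1 + t ^ (-1 / θ) * τ ^ (1 / (n : ℝ))) ^ (-(n : ℝ) - θ)) ^ q) ≤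
        C * t ^ (-((n : ℝ) * q / θ) * (1 / r - 1 / q)) *
          Real.log (Real.exp 1 + 1 / t) ^ γ := by
  have hn' : (0 : ℝ) < n := by exact_mod_cast hn
  have hq : 0 < q := by linarith
  have hr0 : 0 < r := by linarith
  obtain ⟨G, hG, hGb⟩ := core_bd n hn hθ0 hr hrq (abs_nonneg γ)
  have hG0 : 0 ≤ ∫ s in Ioi (0 : ℝ), G s := by
    apply setIntegral_nonneg measurableSet_Ioi
    intro s hs
    have hs : 0 < s := hs
    refine le_trans ?_ (hGb s hs)
    have b1 := LgF_one_le hs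
    have b2 := LgF_one_le (inv_pos.2 hs)
    positivity
  set I := ∫ s in Ioi (0 : ℝ), G s with hI
  set K : ℝ := (n / θ + θ / n + 2) with hK
  have hK1 : 1 ≤ K := by
    have : 0 < n / θ := by positivity
    have : 0 < θ / n := by positivity
    linarith
  refine ⟨K ^ |γ| * 2 ^ |γ| * (I + 1), by positivity, fun t ht => ?_⟩
  set T := t ^ ((n : ℝ) / θ) with hT
  have hT0 : 0 < T := by positivity
  have hLt := LgF_one_le ht
  have hLT := LgF_one_le hT0
  have hcmp : LgF T ^ γ ≤ K ^ |γ| * LgF t ^ γ := by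
    apply cmp_rpow hLT hLt hK1
    · refine (LgF_rpow ht (p := (n : ℝ) / θ) (by positivity)).trans ?_
      have : 0 < θ / n := by positivity
      gcongr
      linarith
    · have h := LgF_rpow hT0 (p := θ / n) (by positivity)
      have e : T ^ (θ / n) = t := by
        rw [hT, ← Real.rpow_mul ht.le]
        have : (n : ℝ) / θ * (θ / n) = 1 := by field_simp
        rw [this, Real.rpow_one]
      rw [e] at h
      refine h.trans ?_
      have : 0 < n / θ := by positivity
      gcongr
      linarith
  set F : ℝ → ℝ := fun τ => τ ^ (q * (1 - 1 / r)) * Real.log (Real.exp 1 + 1 / τ) ^ γ *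
            (t ^ (-(n : ℝ) / θ) *
              (1 + t ^ (-1 / θ) * τ ^ (1 / (n : ℝ))) ^ (-(n : ℝ) - θ)) ^ q with hF
  have hF0 : ∀ s > 0, 0 ≤ F s := by
    intro s hs
    have := LgF_one_le hs
    unfold LgF at this
    rw [hF]
    positivity
  have hpt : ∀ s > 0, F (T * s) ≤ (T ^ (q * (1 - 1 / r) - q) * LgF T ^ γ * 2 ^ |γ|) * G s := by
    intro s hs
    have b1 := LgF_one_le hs
    have b2 := LgF_one_le (inv_pos.2 hs)
    have b3 := LgF_one_le (mul_pos hT0 hs)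
    have hp1 : 1 ≤ LgF s * LgF s⁻¹ := by nlinarith
    have hc : LgF (T * s) ^ γ ≤ (2 * (LgF s * LgF s⁻¹)) ^ |γ| * LgF T ^ γ := by
      apply cmp_rpow b3 hLT (by linarith)
      · refine (LgF_mul hT0 hs).trans ?_
        have : LgF T * LgF s * 1 ≤ LgF T * LgF s * LgF s⁻¹ := by gcongr
        nlinarith
      · have h := LgF_mul (mul_pos hT0 hs) (inv_pos.2 hs)
        rw [mul_assoc, mul_inv_cancel₀ hs.ne', mul_one] at h
        refine h.trans ?_
        have : LgF (T * s) * LgF s⁻¹ * 1 ≤ LgF (T * s) * LgF s⁻¹ * LgF s := by gcongr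
        nlinarith
    have e1 : t ^ (-1 / θ) * (T * s) ^ (1 / (n : ℝ)) = s ^ (1 / (n : ℝ)) := by
      rw [Real.mul_rpow hT0.le hs.le, hT, ← Real.rpow_mul ht.le, ← mul_assoc, ← Real.rpow_add ht]
      have : -1 / θ + (n : ℝ) / θ * (1 / n) = 0 := by field_simp; ring
      rw [this, Real.rpow_zero, one_mul]
    have e2 : t ^ (-(n : ℝ) / θ) = T ^ (-1 : ℝ) := by
      rw [hT, ← Real.rpow_mul ht.le]
      congr 1; ring
    have e3 : F (T * s) = T ^ (q * (1 - 1 / r) - q) * (s ^ (q * (1 - 1 / r)) *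
        (1 + s ^ (1 / (n : ℝ))) ^ ((-(n : ℝ) - θ) * q)) * LgF (T * s) ^ γ := by
      simp only [hF]
      rw [e1, e2, Real.mul_rpow (x := T ^ (-1 : ℝ)) (by positivity) (by positivity), ← Real.rpow_mul hT0.le,
        ← Real.rpow_mul (x := 1 + s ^ (1 / (n : ℝ))) (by positivity), Real.mul_rpow hT0.le hs.le, sub_eq_add_neg _ q,
        Real.rpow_add hT0, neg_one_mul]
      unfold LgF
      ring
    rw [e3]
    calc _ ≤ T ^ (q * (1 - 1 / r) - q) * (s ^ (q * (1 - 1 / r)) *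
        (1 + s ^ (1 / (n : ℝ))) ^ ((-(n : ℝ) - θ) * q)) * ((2 * (LgF s * LgF s⁻¹)) ^ |γ| * LgF T ^ γ) := by
          gcongr
      _ = (T ^ (q * (1 - 1 / r) - q) * LgF T ^ γ * 2 ^ |γ|) * (s ^ (q * (1 - 1 / r)) * (LgF s * LgF (s⁻¹)) ^ |γ| *
        (1 + s ^ (1 / (n : ℝ))) ^ ((-(n : ℝ) - θ) * q)) := by
          rw [Real.mul_rpow (by norm_num) (by positivity)]; ring
      _ ≤ _ := by
          gcongr
          exact hGb s hs
  have hint : ∫ s in Ioi (0 : ℝ), F (T * s) ≤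
      (T ^ (q * (1 - 1 / r) - q) * LgF T ^ γ * 2 ^ |γ|) * I := by
    rw [hI, ← integral_const_mul]
    apply integral_mono_of_nonneg
    · filter_upwards [ae_restrict_mem measurableSet_Ioi] with s hs
      exact hF0 _ (mul_pos hT0 hs)
    · exact hG.const_mul _
    · filter_upwards [ae_restrict_mem measurableSet_Ioi] with s hs
      exact hpt s hs
  have hcv := integral_comp_mul_left_Ioi F 0 hT0
  rw [mul_zero, smul_eq_mul] at hcv
  have hcv' : ∫ τ in Ioi (0 : ℝ), F τ = T * ∫ s in Ioi (0 : ℝ), F (T * s) := by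
    rw [hcv]; field_simp
  rw [hcv']
  have e4 : t ^ (-((n : ℝ) * q / θ) * (1 / r - 1 / q)) = T * T ^ (q * (1 - 1 / r) - q) := by
    have : T * T ^ (q * (1 - 1 / r) - q) = T ^ (1 + (q * (1 - 1 / r) - q)) := by
      rw [Real.rpow_add hT0, Real.rpow_one]
    rw [this, hT, ← Real.rpow_mul ht.le]
    congr 1
    field_simp
    ring
  rw [e4]
  change _ ≤ _ * LgF t ^ γ
  calc _ ≤ T * ((T ^ (q * (1 - 1 / r) - q) * (K ^ |γ| * LgF t ^ γ) * 2 ^ |γ|) * (I + 1)) := by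
        refine mul_le_mul_of_nonneg_left (hint.trans ?_) hT0.le
        gcongr
        linarith
    _ = _ := by ring
end
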